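/- arXiv:2209.03843 — 4 statements merged into one kernel-verified Lean document; each statement's English description precedes it below -/
import Mathlib

section
/- Let f be a smooth cubic form in four variables over 𝔽₂ (i.e., a homogeneous polynomial of degree 3 in x, y, z, t with coefficients in 𝔽₂ such that, over an algebraic closure K of 𝔽₂, the only common zero in K⁴ of f together with its four partial derivatives is the origin). Then the stabilizer subgroup {g ∈ GL₄(𝔽₂) : f ∘ g = f} of f under the linear-substitution action of GL₄(𝔽₂) has order at most 720. -/
open MvPolynomial

noncomputable section

/-- The field with two elements. -/
abbrev F2 : Type := ZMod 2

/-- An algebraic closure of `F2`. -/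
abbrev Kbar : Type := AlgebraicClosure F2

/-- Linear substitution action of a matrix `g` on a polynomial `f`:
`(act g f)(x) = f (g * x)`, i.e. the variable `X i` is replaced by `∑ j, g i j • X j`. -/
def act (g : Matrix (Fin 4) (Fin 4) F2) (f : MvPolynomial (Fin 4) F2) :
    MvPolynomial (Fin 4) F2 :=
  aeval (fun i => ∑ j, g i j • X j) f

lemma act_one (f : MvPolynomial (Fin 4) F2) : act 1 f = f := by
  have h : (fun i => ∑ j, (1 : Matrix (Fin 4) (Fin 4) F2) i j • (X j : MvPolynomial (Fin 4) F2))
      = X := by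
    funext i
    simp [Matrix.one_apply, ite_smul]
  simp [act, h]

lemma act_act (g h : Matrix (Fin 4) (Fin 4) F2) (f : MvPolynomial (Fin 4) F2) :
    act g (act h f) = act (h * g) f := by
  show (aeval _) ((aeval _) f) = _
  rw [← AlgHom.comp_apply, comp_aeval]
  have key : (fun i => (aeval fun i => ∑ j, g i j • (X j : MvPolynomial (Fin 4) F2))
        (∑ j, h i j • (X j : MvPolynomial (Fin 4) F2)))
      = fun i => ∑ j, (h * g) i j • (X j : MvPolynomial (Fin 4) F2) := by
    funext i
    simp only [map_sum, map_smul, aeval_X, Matrix.mul_apply, Finset.smul_sum, smul_smul,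
      Finset.sum_smul]
    rw [Finset.sum_comm]
  rw [key]
  rfl

/-- The stabilizer of a polynomial `f` under the linear-substitution action of `GL₄(𝔽₂)`. -/
def stab (f : MvPolynomial (Fin 4) F2) : Subgroup (GL (Fin 4) F2) where
  carrier := {g | act (g : Matrix (Fin 4) (Fin 4) F2) f = f}
  one_mem' := by simpa using act_one f
  mul_mem' := by
    intro a b ha hb
    simp only [Set.mem_setOf_eq] at *
    have : act ((↑(a * b) : Matrix (Fin 4) (Fin 4) F2)) f = act ↑b (act ↑a f) := by
      rw [act_act]; rfl
    rw [this, ha, hb]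
  inv_mem' := by
    intro a ha
    simp only [Set.mem_setOf_eq] at *
    have h2 := congrArg (act ((↑(a⁻¹) : Matrix (Fin 4) (Fin 4) F2))) ha
    rw [act_act] at h2
    rw [Units.mul_inv, act_one] at h2
    exact h2.symm

/-- A smooth cubic form over `𝔽₂`: homogeneous of degree `3`, such that over an algebraic
closure the only common zero of `f` and its four partial derivatives is the origin. -/
def IsSmoothCubic (f : MvPolynomial (Fin 4) F2) : Prop :=
  f.IsHomogeneous 3 ∧
    ∀ v : Fin 4 → Kbar,
      eval v (map (algebraMap F2 Kbar) f) = 0 →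
      (∀ i : Fin 4, eval v (map (algebraMap F2 Kbar) (pderiv i f)) = 0) →
      v = 0

/-- The cubic form `x²t + y²z + yz² + xt²`. -/
def c0 : MvPolynomial (Fin 4) F2 :=
  X 0 ^ 2 * X 3 + X 1 ^ 2 * X 2 + X 1 * X 2 ^ 2 + X 0 * X 3 ^ 2

open scoped Matrix Pointwise

/-- Value of `f` at a geometric point. -/
def Fv (f : MvPolynomial (Fin 4) F2) (v : Fin 4 → Kbar) : Kbar :=
  eval v (map (algebraMap F2 Kbar) f)

/-- The derivative of `f` at `v`, in direction `a`. -/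
def Dv (f : MvPolynomial (Fin 4) F2) (v a : Fin 4 → Kbar) : Kbar :=
  ∑ i, a i * Fv (pderiv i f) v

lemma Fv_add (f g : MvPolynomial (Fin 4) F2) (v) : Fv (f + g) v = Fv f v + Fv g v := by
  simp [Fv]

lemma Dv_add (f g : MvPolynomial (Fin 4) F2) (v a) : Dv (f + g) v a = Dv f v a + Dv g v a := by
  simp [Dv, Fv_add, mul_add, Finset.sum_add_distrib]

lemma Fv_smul (c : F2) (f : MvPolynomial (Fin 4) F2) (v) :
    Fv (c • f) v = algebraMap F2 Kbar c * Fv f v := by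
  simp [Fv, MvPolynomial.smul_eq_C_mul]

lemma Dv_smul (c : F2) (f : MvPolynomial (Fin 4) F2) (v a) :
    Dv (c • f) v a = algebraMap F2 Kbar c * Dv f v a := by
  simp only [Dv, Finset.mul_sum]
  refine Finset.sum_congr rfl fun i _ => ?_
  rw [Derivation.map_smul, Fv_smul]
  ring

lemma Dv_vec_add (f : MvPolynomial (Fin 4) F2) (v a b) :
    Dv f v (a + b) = Dv f v a + Dv f v b := by
  simp [Dv, add_mul, Finset.sum_add_distrib]

lemma Dv_vec_smul (f : MvPolynomial (Fin 4) F2) (v a) (c : Kbar) :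
    Dv f v (c • a) = c * Dv f v a := by
  simp [Dv, mul_assoc, Finset.mul_sum]

lemma Dv_mon (i j k : Fin 4) (v a) : Dv (X i * X j * X k) v a =
    a i * v j * v k + v i * a j * v k + v i * v j * a k := by
  simp only [Dv, Fv, Derivation.leibniz, pderiv_X, smul_eq_mul, map_add, map_mul, map_X, eval_X,
    Pi.single_apply, mul_add, Finset.sum_add_distrib]
  simp only [apply_ite (map (algebraMap F2 Kbar)), apply_ite (eval v), map_one, map_zero]
  simp only [mul_ite, mul_one, mul_zero, Finset.sum_ite_eq, Finset.mem_univ, if_true]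
  ring

lemma Fv_mon (i j k : Fin 4) (v) : Fv (X i * X j * X k) v = v i * v j * v k := by
  simp [Fv]

/-- The basic identities satisfied by a cubic form. -/
lemma cubic_identities (f : MvPolynomial (Fin 4) F2) (hf : f.IsHomogeneous 3) :
    (∀ v a (s : Kbar), Fv f (v + s • a) = Fv f v + s * Dv f v a + s ^ 2 * Dv f a v + s ^ 3 * Fv f a) ∧
    (∀ v (c : Kbar), Fv f (c • v) = c ^ 3 * Fv f v) ∧
    (∀ v a (c : Kbar), Dv f (c • v) a = c ^ 2 * Dv f v a) ∧
    (∀ v, Dv f v v = 3 * Fv f v) := by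
  have h1 : f ∈ Submodule.span F2 (Set.range (X : Fin 4 → MvPolynomial (Fin 4) F2) ^ 3) := by
    rw [← Submodule.span_pow, ← homogeneousSubmodule_one_eq_span_X, homogeneousSubmodule_one_pow]
    exact hf
  clear hf
  induction h1 using Submodule.span_induction with
  | mem x hx =>
    rw [pow_succ, pow_two] at hx
    obtain ⟨_, ⟨_, ⟨i, rfl⟩, _, ⟨j, rfl⟩, rfl⟩, _, ⟨k, rfl⟩, rfl⟩ := hx
    simp only [Fv_mon, Dv_mon, Pi.add_apply, Pi.smul_apply, smul_eq_mul]
    refine ⟨?_, ?_, ?_, ?_⟩ <;> intros <;> ring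
  | zero => simp [Fv, Dv]
  | add x y _ _ hx hy =>
    obtain ⟨x1, x2, x3, x4⟩ := hx
    obtain ⟨y1, y2, y3, y4⟩ := hy
    simp only [Fv_add, Dv_add, x1, x2, x3, x4, y1, y2, y3, y4]
    refine ⟨?_, ?_, ?_, ?_⟩ <;> intros <;> ring
  | smul c x _ hx =>
    obtain ⟨x1, x2, x3, x4⟩ := hx
    simp only [Fv_smul, Dv_smul, x1, x2, x3, x4]
    refine ⟨?_, ?_, ?_, ?_⟩ <;> intros <;> ring

/-- The matrix `g`, over the algebraic closure. -/
def mK (g : Matrix (Fin 4) (Fin 4) F2) : Matrix (Fin 4) (Fin 4) Kbar :=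
  (algebraMap F2 Kbar).mapMatrix g

lemma Fv_act (g : Matrix (Fin 4) (Fin 4) F2) (f : MvPolynomial (Fin 4) F2) (v) :
    Fv (act g f) v = Fv f (mK g *ᵥ v) := by
  have key : ∀ (p : MvPolynomial (Fin 4) F2) (u : Fin 4 → Kbar), Fv p u = aeval u p := by
    intro p u
    rw [Fv, eval_map, aeval_def]
  rw [key, key, act, ← AlgHom.comp_apply, comp_aeval]
  congr 2
  funext i
  simp [mK, Matrix.mulVec, dotProduct, Algebra.smul_def]

lemma not_smooth_of (f : MvPolynomial (Fin 4) F2) (hf : IsSmoothCubic f) (v) (hv : v ≠ 0)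
    (h0 : Fv f v = 0) (h1 : ∀ a, Dv f v a = 0) : False := by
  refine hv (hf.2 v h0 fun i => ?_)
  have := h1 (Pi.single i 1)
  have e : Fv (pderiv i f) v = 0 := by simpa [Dv, Pi.single_apply] using this
  exact e

/-- Invariance of the derivative. -/
lemma Dv_inv (f : MvPolynomial (Fin 4) F2) (hf : f.IsHomogeneous 3)
    (M : Matrix (Fin 4) (Fin 4) Kbar) (hM : ∀ v, Fv f (M *ᵥ v) = Fv f v) (v a) :
    Dv f (M *ᵥ v) (M *ᵥ a) = Dv f v a := by
  classical
  obtain ⟨h1, -, -, -⟩ := cubic_identities f hf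
  have key : ∀ s : Kbar, s * (Dv f (M *ᵥ v) (M *ᵥ a) - Dv f v a)
      + s ^ 2 * (Dv f (M *ᵥ a) (M *ᵥ v) - Dv f a v) = 0 := by
    intro s
    have e := hM (v + s • a)
    rw [Matrix.mulVec_add, Matrix.mulVec_smul, h1, h1, hM, hM] at e
    linear_combination e
  obtain ⟨s, hs⟩ := Infinite.exists_notMem_finset ({0, 1} : Finset Kbar)
  simp only [Finset.mem_insert, Finset.mem_singleton, not_or] at hs
  have e1 := key 1
  have e2 := key s
  have e3 : s * (s - 1) * (Dv f (M *ᵥ v) (M *ᵥ a) - Dv f v a) = 0 := by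
    linear_combination s ^ 2 * e1 - e2
  have := mul_ne_zero hs.1 (sub_ne_zero.2 hs.2)
  exact sub_eq_zero.1 ((mul_eq_zero.1 e3).resolve_left this)

lemma inv_of_mem (f : MvPolynomial (Fin 4) F2) (h : GL (Fin 4) F2) (hh : h ∈ stab f) (v) :
    Fv f (mK h *ᵥ v) = Fv f v := by
  rw [← Fv_act]
  exact congrArg (fun p => Fv p v) hh

lemma root_sq (p : Polynomial F2) (z : Kbar) (hz : p.eval₂ (algebraMap F2 Kbar) z = 0) :
    p.eval₂ (algebraMap F2 Kbar) (z ^ 2) = 0 := by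
  have h := Polynomial.hom_eval₂ p (algebraMap F2 Kbar) (frobenius Kbar 2) z
  rw [hz, map_zero, Subsingleton.elim ((frobenius Kbar 2).comp (algebraMap F2 Kbar))
    (algebraMap F2 Kbar), frobenius_def] at h
  exact h.symm

lemma root_iff (h : Matrix (Fin 4) (Fin 4) F2) (z : Kbar) :
    h.charpoly.eval₂ (algebraMap F2 Kbar) z = 0 ↔ (Matrix.scalar _ z - mK h).det = 0 := by
  rw [← Matrix.eval_charpoly, mK, RingHom.mapMatrix_apply, Matrix.charpoly_map,
    Polynomial.eval_map]

/-- An element of order seven has an eigenvalue other than one. -/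
lemma exists_root (h : Matrix (Fin 4) (Fin 4) F2) (h7 : h ^ 7 = 1) (h1 : h ≠ 1) :
    ∃ z : Kbar, z ≠ 1 ∧ h.charpoly.eval₂ (algebraMap F2 Kbar) z = 0 := by
  by_contra! hc
  set p := (mK h).charpoly with hp
  have hpm : p = h.charpoly.map (algebraMap F2 Kbar) := by
    rw [hp, mK, RingHom.mapMatrix_apply, Matrix.charpoly_map]
  have hmon : p.Monic := Matrix.charpoly_monic _
  have hs : p.Splits := IsAlgClosed.splits p
  have hdeg : p.natDegree = 4 := by simp [hp, Matrix.charpoly_natDegree_eq_dim]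
  have hr : p.roots = Multiset.replicate 4 1 := by
    rw [Multiset.eq_replicate]
    refine ⟨by rw [← hdeg, hs.natDegree_eq_card_roots], fun b hb => ?_⟩
    by_contra hb1
    refine hc b hb1 ?_
    rw [← Polynomial.eval_map, ← hpm]
    exact (Polynomial.mem_roots'.1 hb).2
  have he := hs.eq_prod_roots_of_monic hmon
  rw [hr] at he
  have hch := Matrix.aeval_self_charpoly (mK h)
  rw [← hp, he] at hch
  simp only [Multiset.map_replicate, Multiset.prod_replicate, map_pow, map_sub,
    Polynomial.aeval_X, map_one] at hch
  have h4 : (mK h) ^ 4 = 1 := by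
    have e2 : (2 : Matrix (Fin 4) (Fin 4) Kbar) = 0 := by
      have : (2 : Kbar) = 0 := CharTwo.two_eq_zero
      ext i j
      rw [← Matrix.diagonal_ofNat, this]
      simp
    have : (mK h - 1) ^ 4 = (mK h) ^ 4 - 1
      + 2 * (-2 * (mK h) ^ 3 + 3 * (mK h) ^ 2 - 2 * (mK h) + 1) := by noncomm_ring
    rw [this, e2, zero_mul, add_zero] at hch
    exact sub_eq_zero.1 hch
  have h7' : (mK h) ^ 7 = 1 := by
    rw [mK, ← map_pow, h7, map_one]
  have h8 : mK h = 1 := by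
    have : (mK h) ^ 8 = 1 := by rw [show 8 = 4 * 2 from rfl, pow_mul, h4, one_pow]
    rwa [pow_succ, h7', one_mul] at this
  apply h1
  have hinj : Function.Injective ((algebraMap F2 Kbar).mapMatrix (m := Fin 4)) :=
    Matrix.map_injective (algebraMap F2 Kbar).injective
  apply hinj
  rw [map_one]
  exact h8

set_option maxHeartbeats 2000000 in
/-- The stabilizer of a smooth cubic has no element of order seven. -/
lemma no_order_seven (f : MvPolynomial (Fin 4) F2) (hf : IsSmoothCubic f) (h : GL (Fin 4) F2)
    (hh : h ∈ stab f) (ho : orderOf h = 7) : False := by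
  classical
  have h7 : (h : Matrix (Fin 4) (Fin 4) F2) ^ 7 = 1 := by
    rw [← Units.val_pow_eq_pow_val, ← ho, pow_orderOf_eq_one, Units.val_one]
  have h1 : (h : Matrix (Fin 4) (Fin 4) F2) ≠ 1 := by
    intro e
    have : h = 1 := Units.ext e
    simp [this] at ho
  obtain ⟨z, hz1, hz⟩ := exists_root _ h7 h1
  have hinv := inv_of_mem f h hh
  obtain ⟨-, i2, i3, -⟩ := cubic_identities f hf.1
  obtain ⟨v, hv0, hv⟩ := Matrix.exists_mulVec_eq_zero_iff.2 ((root_iff _ _).1 hz)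
  have hev : mK h *ᵥ v = z • v := by
    rw [Matrix.sub_mulVec, sub_eq_zero] at hv
    rw [← hv]
    ext i
    simp [Matrix.scalar_apply, Matrix.mulVec_diagonal]
  have hpow : ∀ n : ℕ, (mK h) ^ n *ᵥ v = z ^ n • v := by
    intro n
    induction n with
    | zero => simp
    | succ n ih => rw [pow_succ, ← Matrix.mulVec_mulVec, hev, Matrix.mulVec_smul, ih, smul_smul,
        pow_succ, mul_comm]
  have hz7 : z ^ 7 = 1 := by
    have e := hpow 7
    rw [mK, ← map_pow, h7, map_one, Matrix.one_mulVec] at e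
    by_contra hne
    have e' : (z ^ 7 - 1) • v = 0 := by rw [sub_smul, one_smul, ← e, sub_self]
    exact (smul_eq_zero.1 e').elim (fun h => hne (sub_eq_zero.1 h)) hv0
  have hoz : orderOf z = 7 := by
    haveI : Fact (Nat.Prime 7) := ⟨by norm_num⟩
    exact orderOf_eq_prime hz7 hz1
  refine not_smooth_of f hf v hv0 ?_ ?_
  · have e := hinv v
    rw [hev, i2] at e
    have h3 : z ^ 3 ≠ 1 := fun h => by
      have := orderOf_dvd_of_pow_eq_one h
      rw [hoz] at this
      norm_num at this
    have e' : (z ^ 3 - 1) * Fv f v = 0 := by linear_combination e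
    exact (mul_eq_zero.1 e').resolve_left (sub_ne_zero.2 h3)
  · by_contra! hne
    obtain ⟨a0, ha0⟩ := hne
    -- the gradient is a left eigenvector, with eigenvalue `z ^ 5`
    have hD : ∀ a, Dv f v (mK h *ᵥ a) = z ^ 5 * Dv f v a := by
      intro a
      have e := Dv_inv f hf.1 (mK h) hinv v a
      rw [hev, i3] at e
      linear_combination z ^ 5 * e - Dv f v (mK h *ᵥ a) * hz7
    set w : Fin 4 → Kbar := fun i => Fv (pderiv i f) v with hw
    have hDw : ∀ a, Dv f v a = w ⬝ᵥ a := by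
      intro a
      simp [Dv, hw, dotProduct, mul_comm]
    have hw0 : w ≠ 0 := by
      intro e
      apply ha0
      rw [hDw, e, zero_dotProduct]
    have hwe : w ᵥ* (Matrix.scalar _ (z ^ 5) - mK h) = 0 := by
      apply dotProduct_eq
      intro a
      rw [← Matrix.dotProduct_mulVec, Matrix.sub_mulVec, dotProduct_sub, ← hDw (mK h *ᵥ a), hD,
        hDw, zero_dotProduct]
      simp [Matrix.scalar_apply, dotProduct, Matrix.mulVec_diagonal, Finset.mul_sum,
        mul_left_comm]
    have r5 := (root_iff _ _).2 (Matrix.exists_vecMul_eq_zero_iff.1 ⟨w, hw0, hwe⟩)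
    have r2 := root_sq _ _ hz
    have r4 := root_sq _ _ r2
    have r10 := root_sq _ _ r5
    have r20 := root_sq _ _ r10
    rw [show ((z ^ 2) ^ 2) = z ^ 4 by ring] at r4
    rw [show ((z ^ 5) ^ 2) = z ^ 3 by linear_combination z ^ 3 * hz7] at r10
    rw [show (((z ^ 5) ^ 2) ^ 2) = z ^ 6 by
      linear_combination (z ^ 13 + z ^ 6) * hz7] at r20
    set p := (mK h).charpoly with hp
    have hpm : p = (h : Matrix (Fin 4) (Fin 4) F2).charpoly.map (algebraMap F2 Kbar) := by
      rw [hp, mK, RingHom.mapMatrix_apply, Matrix.charpoly_map]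
    have hmon : p.Monic := Matrix.charpoly_monic _
    have hdeg : p.natDegree = 4 := by simp [hp, Matrix.charpoly_natDegree_eq_dim]
    have hsub : (Finset.Icc 1 6).image (fun n => z ^ n) ⊆ p.roots.toFinset := by
      intro x hx
      simp only [Finset.mem_image, Finset.mem_Icc] at hx
      obtain ⟨n, ⟨hn1, hn2⟩, rfl⟩ := hx
      rw [Multiset.mem_toFinset, Polynomial.mem_roots hmon.ne_zero, Polynomial.IsRoot, hpm,
        Polynomial.eval_map]
      interval_cases n
      · simpa using hz
      all_goals assumption
    have hcard : ((Finset.Icc 1 6).image (fun n => z ^ n)).card = 6 := by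
      rw [Finset.card_image_of_injOn]
      · simp
      · intro a ha b hb hab
        refine pow_injOn_Iio_orderOf ?_ ?_ hab
        · simp at ha; simp [hoz]; omega
        · simp at hb; simp [hoz]; omega
    have := Finset.card_le_card hsub
    have h3 := Multiset.toFinset_card_le p.roots
    have h4 := p.card_roots'
    omega

/-- Two distinct transvections with the same centre cannot both preserve a smooth cubic. -/
lemma no_two_transvections (f : MvPolynomial (Fin 4) F2) (hf : IsSmoothCubic f)
    (a w₁ w₂ : Fin 4 → Kbar) (ha : a ≠ 0) (h₁ : w₁ ≠ 0) (h₂ : w₂ ≠ 0) (h₁₂ : w₁ ≠ w₂)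
    (p₁ : w₁ ⬝ᵥ a = 0) (p₂ : w₂ ⬝ᵥ a = 0)
    (t₁ : ∀ v, Fv f (v + (w₁ ⬝ᵥ v) • a) = Fv f v)
    (t₂ : ∀ v, Fv f (v + (w₂ ⬝ᵥ v) • a) = Fv f v) : False := by
  obtain ⟨i1, -, -, i4⟩ := cubic_identities f hf.1
  set w : Fin 4 → Kbar := fun i => Fv (pderiv i f) a with hw
  have hDw : ∀ v, Dv f a v = w ⬝ᵥ v := by
    intro a
    simp [Dv, hw, dotProduct, mul_comm]
  let L : (Fin 4 → Kbar) → MvPolynomial (Fin 4) Kbar := fun u => ∑ i, C (u i) * X i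
  have hL : ∀ u v, eval v (L u) = u ⬝ᵥ v := by
    intro u v
    simp [L, dotProduct]
  have hL0 : ∀ u, L u = 0 → u = 0 := by
    intro u hu
    funext i
    have := hL u (Pi.single i 1)
    rw [hu] at this
    simpa using this.symm
  let u : Fin 4 → Kbar := w + Fv f a • (w₁ + w₂)
  have hprod : L w₁ * L w₂ * L (w₁ - w₂) * L u = 0 := by
    apply MvPolynomial.funext
    intro v
    simp only [map_mul, hL, map_zero, u, sub_dotProduct, add_dotProduct, smul_dotProduct,
      smul_eq_mul]
    have e1 := t₁ v
    have e2 := t₂ v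
    rw [i1, hDw] at e1 e2
    linear_combination (w₂ ⬝ᵥ v) * e1 - (w₁ ⬝ᵥ v) * e2
  have hu : u = 0 := by
    apply hL0
    refine (mul_eq_zero.1 hprod).resolve_left ?_
    refine mul_ne_zero (mul_ne_zero ?_ ?_) ?_
    · exact fun h => h₁ (hL0 _ h)
    · exact fun h => h₂ (hL0 _ h)
    · exact fun h => h₁₂ (sub_eq_zero.1 (hL0 _ h))
  have h0 : Fv f a = 0 := by
    have e : u ⬝ᵥ a = 0 := by rw [hu, zero_dotProduct]
    have e2 : (2 : Kbar) = 0 := CharTwo.two_eq_zero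
    simp only [u, add_dotProduct, smul_dotProduct, p₁, p₂, ← hDw, i4] at e
    simp only [add_zero, smul_zero] at e
    linear_combination e - Fv f a * e2
  refine not_smooth_of f hf a ha h0 fun v => ?_
  rw [hDw]
  have : w = u := by simp [u, h0]
  rw [this, hu, zero_dotProduct]

/-- The index vector, extended by zero. -/
def ext0 (w : Fin 3 → F2) : Fin 4 → F2 := Fin.cons 0 w

/-- The first basis vector. -/
def e0 : Fin 4 → F2 := Pi.single 0 1

lemma ext0_e0 (w) : ext0 w ⬝ᵥ e0 = 0 := by simp [ext0, e0]

/-- The group of transvections with centre `e0`. -/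
def tau : Multiplicative (Fin 3 → F2) →* GL (Fin 4) F2 :=
  MonoidHom.toHomUnits
    { toFun := fun w => 1 + Matrix.vecMulVec e0 (ext0 w.toAdd)
      map_one' := by
        have : ext0 (Multiplicative.toAdd 1) = 0 := by
          funext i
          refine Fin.cases ?_ (fun j => ?_) i <;> simp [ext0]
        rw [this]; simp
      map_mul' := by
        intro x y
        have : ext0 (Multiplicative.toAdd (x * y)) = ext0 x.toAdd + ext0 y.toAdd := by
          funext i
          refine Fin.cases ?_ (fun j => ?_) i <;> simp [ext0]
        rw [this, mul_add, mul_one, add_mul, Matrix.vecMulVec_mul_vecMulVec, ext0_e0,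
          Matrix.vecMulVec_add]
        simp [add_assoc] }

lemma tau_val (w) : (tau w : Matrix (Fin 4) (Fin 4) F2) =
    1 + Matrix.vecMulVec e0 (ext0 w.toAdd) := rfl

lemma ext0_inj : Function.Injective ext0 := fun _ _ h => Fin.cons_right_injective _ h

lemma transvection_unique (f : MvPolynomial (Fin 4) F2) (hf : IsSmoothCubic f)
    (g : GL (Fin 4) F2) (x y : Multiplicative (Fin 3 → F2)) (hx : x ≠ 1) (hy : y ≠ 1)
    (hxs : g⁻¹ * tau x * g ∈ stab f) (hys : g⁻¹ * tau y * g ∈ stab f) : x = y := by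
  by_contra hxy
  let ι := algebraMap F2 Kbar
  let a : Fin 4 → F2 := (g⁻¹ : GL (Fin 4) F2).1 *ᵥ e0
  let φ : Multiplicative (Fin 3 → F2) → Fin 4 → F2 := fun x => ext0 x.toAdd ᵥ* g.1
  have hgg : g.1 * (g⁻¹ : GL (Fin 4) F2).1 = 1 := Units.mul_inv g
  have hφ : Function.Injective φ := by
    intro x y h
    have h' := congrArg (fun v => v ᵥ* (g⁻¹ : GL (Fin 4) F2).1) h
    simp only [φ, Matrix.vecMul_vecMul, hgg, Matrix.vecMul_one] at h'
    exact Multiplicative.toAdd.injective (ext0_inj h')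
  have hφ1 : φ 1 = 0 := by
    have : ext0 (Multiplicative.toAdd 1) = 0 := by
      funext i
      refine Fin.cases ?_ (fun j => ?_) i <;> simp [ext0]
    simp only [φ, this, Matrix.zero_vecMul]
  have hφa : ∀ x, φ x ⬝ᵥ a = 0 := by
    intro x
    simp only [φ, a]
    rw [← Matrix.dotProduct_mulVec, Matrix.mulVec_mulVec, hgg, Matrix.one_mulVec, ext0_e0]
  have ha : a ≠ 0 := by
    intro h
    have h' := congrArg (fun v => g.1 *ᵥ v) h
    simp only [a, Matrix.mulVec_mulVec, hgg, Matrix.one_mulVec, Matrix.mulVec_zero] at h'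
    have := congrFun h' 0
    simp [e0] at this
  have hconj : ∀ x, ((g⁻¹ * tau x * g : GL (Fin 4) F2) : Matrix (Fin 4) (Fin 4) F2) =
      1 + Matrix.vecMulVec a (φ x) := by
    intro x
    rw [Units.val_mul, Units.val_mul, tau_val, mul_add, add_mul, mul_one,
      Matrix.mul_vecMulVec, Matrix.vecMulVec_mul, Units.inv_mul]
  have hinj : Function.Injective (fun v : Fin 4 → F2 => ι ∘ v) :=
    ι.injective.comp_left
  have hz : ι ∘ (0 : Fin 4 → F2) = 0 := by funext i; simp
  have hdot : ∀ u v : Fin 4 → F2, (ι ∘ u) ⬝ᵥ (ι ∘ v) = ι (u ⬝ᵥ v) := by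
    intro u v
    simp [dotProduct]
  have ht : ∀ x, g⁻¹ * tau x * g ∈ stab f → ∀ v,
      Fv f (v + ((ι ∘ φ x) ⬝ᵥ v) • (ι ∘ a)) = Fv f v := by
    intro x hx v
    rw [← inv_of_mem f _ hx v, hconj]
    congr 1
    have : mK (1 + Matrix.vecMulVec a (φ x)) = 1 + Matrix.vecMulVec (ι ∘ a) (ι ∘ φ x) := by
      rw [mK, map_add, map_one]
      congr 1
      ext i j
      simp [Matrix.vecMulVec_apply, ι]
    rw [this, Matrix.add_mulVec, Matrix.one_mulVec, Matrix.vecMulVec_mulVec]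
    ext i
    simp [mul_comm]
  have hne : ∀ x, x ≠ 1 → ι ∘ φ x ≠ 0 := by
    intro x hx h
    rw [← hz] at h
    have := hinj h
    rw [← hφ1] at this
    exact hx (hφ this)
  refine no_two_transvections f hf (ι ∘ a) (ι ∘ φ x) (ι ∘ φ y) ?_ (hne x hx) (hne y hy)
    ?_ ?_ ?_ (ht x hxs) (ht y hys)
  · intro h
    rw [← hz] at h
    exact ha (hinj h)
  · intro h
    exact hxy (hφ (hinj h))
  · rw [hdot, hφa, map_zero]
  · rw [hdot, hφa, map_zero]

lemma four_dvd_card {T Y : Type} [Group T] [Finite T] [MulAction T Y] [Finite Y]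
    (hT : Nat.card T = 8)
    (h : ∀ y : Y, ∀ a b : T, a ≠ 1 → b ≠ 1 → a • y = y → b • y = y → a = b) :
    4 ∣ Nat.card Y := by
  classical
  rw [Nat.card_congr (MulAction.selfEquivSigmaOrbitsQuotientStabilizer T Y)]
  haveI := Fintype.ofFinite (MulAction.orbitRel.Quotient T Y)
  rw [Nat.card_sigma]
  refine Finset.dvd_sum fun ω _ => ?_
  set H := MulAction.stabilizer T ω.out
  have h1 := Subgroup.card_mul_index H
  have h2 : Nat.card H ≤ 2 := by
    by_contra! hc
    haveI := Fintype.ofFinite H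
    rw [Nat.card_eq_fintype_card] at hc
    obtain ⟨a, b, c, hab, hac, hbc⟩ := Fintype.two_lt_card_iff.1 hc
    have key : ∀ a b : H, a ≠ 1 → b ≠ 1 → a = b := fun a b ha hb =>
      Subtype.ext (h ω.out a b (fun e => ha (Subtype.ext e)) (fun e => hb (Subtype.ext e)) a.2 b.2)
    by_cases ha : a = 1
    · subst ha
      exact hbc (key b c hab.symm hac.symm)
    · by_cases hb : b = 1
      · subst hb
        exact hac (key a c ha hbc.symm)
      · exact hab (key a b ha hb)
  change 4 ∣ H.index
  have h3 : 0 < Nat.card H := Nat.card_pos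
  rw [hT] at h1
  interval_cases Nat.card H <;> omega

/-- the stabilizer of a smooth cubic form over `𝔽₂` under the
linear-substitution action of `GL₄(𝔽₂)` has order at most `720`. -/
theorem stab_card_le_720 (f : MvPolynomial (Fin 4) F2) (hf : IsSmoothCubic f) :
    Nat.card (stab f) ≤ 720 := by
  have hG : Nat.card (GL (Fin 4) F2) = 20160 := by
    rw [Matrix.card_GL_field]
    simp [Fin.prod_univ_succ, ZMod.card]
  have h1 := Subgroup.card_mul_index (stab f)
  rw [hG] at h1
  have h7 : 7 ∣ (stab f).index := by
    have : ¬ 7 ∣ Nat.card (stab f) := by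
      intro hd
      haveI : Fact (Nat.Prime 7) := ⟨by norm_num⟩
      obtain ⟨x, hx⟩ := exists_prime_orderOf_dvd_card' 7 hd
      refine no_order_seven f hf x.1 x.2 ?_
      rw [← hx, Subgroup.orderOf_coe]
    have hd : 7 ∣ Nat.card (stab f) * (stab f).index := by rw [h1]; norm_num
    exact ((Nat.Prime.dvd_mul (by norm_num)).1 hd).resolve_left this
  have h4 : 4 ∣ (stab f).index := by
    letI : MulAction (Multiplicative (Fin 3 → F2)) (GL (Fin 4) F2 ⧸ stab f) :=
      MulAction.compHom _ tau
    refine four_dvd_card (T := Multiplicative (Fin 3 → F2)) (Y := GL (Fin 4) F2 ⧸ stab f) ?_ ?_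
    · simp [ZMod.card]
    · intro y a b ha hb hay hby
      obtain ⟨g, rfl⟩ := QuotientGroup.mk_surjective y
      have conv : ∀ x : Multiplicative (Fin 3 → F2),
          x • (QuotientGroup.mk g : GL (Fin 4) F2 ⧸ stab f) = QuotientGroup.mk g →
          g⁻¹ * tau x * g ∈ stab f := by
        intro x hx
        have hx' : (QuotientGroup.mk (tau x * g) : GL (Fin 4) F2 ⧸ stab f)
          = QuotientGroup.mk g := hx
        have := QuotientGroup.eq.1 hx'.symm
        rwa [← mul_assoc] at this
      exact transvection_unique f hf g a b ha hb (conv a hay) (conv b hby)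
  have h28 : 28 ∣ (stab f).index :=
    Nat.Coprime.mul_dvd_of_dvd_of_dvd (by norm_num : Nat.Coprime 4 7) h4 h7
  obtain ⟨k, hk⟩ := h28
  rw [hk] at h1
  have hk0 : 0 < k := Nat.pos_of_ne_zero (by rintro rfl; simp at h1)
  nlinarith [Nat.zero_le (Nat.card (stab f)), Nat.mul_le_mul_left (Nat.card (stab f)) hk0]
end
end

section
/- Let f be a smooth cubic form in four variables over 𝔽₂. If the stabilizer subgroup {g ∈ GL₄(𝔽₂) : f ∘ g = f} has order exactly 720, then this stabilizer is isomorphic to the symmetric group S₆. -/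
open MvPolynomial

noncomputable section

def Q (A : Matrix (Fin 4) (Fin 4) F2) : MvPolynomial (Fin 4) F2 :=
  ∑ i, ∑ j, A i j • (X i * X j ^ 2)

def J : Matrix (Fin 4) (Fin 4) F2 := !![0,1,1,1;1,0,1,1;1,1,0,1;1,1,1,0]
def G : Matrix (Fin 4) (Fin 4) F2 := !![0,1,0,0;0,0,1,0;0,0,0,1;1,1,1,1]

def T (t : Fin 4 → F2) : Matrix (Fin 4) (Fin 4) F2 :=
  J * (t 0 • 1 + t 1 • G + t 2 • G ^ 2 + t 3 • G ^ 3)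

lemma act_Q (h A : Matrix (Fin 4) (Fin 4) F2) : act h (Q A) = Q (h.transpose * A * h) := by
  have e : ∀ j, (∑ l, h j l • (X l : MvPolynomial (Fin 4) F2)) ^ 2 = ∑ l, h j l • X l ^ 2 := by
    intro j
    rw [sum_pow_char]
    refine Finset.sum_congr rfl fun l _ => ?_
    rw [smul_pow, ZMod.pow_card]
  have : act h (Q A) = ∑ i, ∑ j, A i j • ((∑ k, h i k • X k) * (∑ l, h j l • X l ^ 2)) := by
    simp only [act, Q, map_sum, map_smul, map_mul, map_pow, aeval_X, e]
  rw [this]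
  unfold Q
  simp only [Matrix.mul_apply, Matrix.transpose_apply, Fin.sum_univ_four, smul_eq_C_mul, map_add, map_mul]
  ring

lemma G5 : G ^ 5 = 1 := by decide +kernel
lemma T_nonsym : ∀ t : Fin 4 → F2, t = 0 ∨ T t = J ∨ T t = (1 + G).transpose * J * (1 + G) ∨
    T t = (1 + G^2).transpose * J * (1 + G^2) ∨
    ((∃ n : Fin 20, T t ^ (n.val + 1) = 1) ∧
      ∃ k : Fin 4, T t * G ^ (k.val + 1) = (T t).transpose) := by
  decide +kernel

lemma act_mul' (h : Matrix (Fin 4) (Fin 4) F2) (p q : MvPolynomial (Fin 4) F2) :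
    act h (p * q) = act h p * act h q := map_mul _ _ _
lemma act_add' (h : Matrix (Fin 4) (Fin 4) F2) (p q : MvPolynomial (Fin 4) F2) :
    act h (p + q) = act h p + act h q := map_add _ _ _
lemma act_smul' (h : Matrix (Fin 4) (Fin 4) F2) (c : F2) (q : MvPolynomial (Fin 4) F2) :
    act h (c • q) = c • act h q := map_smul _ _ _
lemma act_X' (h : Matrix (Fin 4) (Fin 4) F2) (i : Fin 4) :
    act h (X i) = ∑ j, h i j • X j := aeval_X _ _

/-- The cyclic sum over the powers of `G`. -/
def Rey (p : MvPolynomial (Fin 4) F2) : MvPolynomial (Fin 4) F2 :=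
  p + act G p + act (G ^ 2) p + act (G ^ 3) p + act (G ^ 4) p

lemma G1X : act G (X 0) = X 1 ∧ act G (X 1) = X 2 ∧ act G (X 2) = X 3 ∧
    act G (X 3) = X 0 + X 1 + X 2 + X 3 := by
  simp [act_X', G, Fin.sum_univ_four]

/-- Coefficients (in terms of the `T t`) of the cyclic sum of a cubic monomial. -/
lemma Q_T (t : Fin 4 → F2) : Q (T t) =
    t 0 • Q J + t 1 • Q (J * G) + t 2 • Q (J * G ^ 2) + t 3 • Q (J * G ^ 3) := by
  simp only [T, Q, Matrix.mul_add, Matrix.mul_smul, Matrix.add_apply, Matrix.smul_apply, add_smul,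
    Finset.sum_add_distrib, Finset.smul_sum, smul_assoc, Matrix.mul_one]

def W : Submodule F2 (MvPolynomial (Fin 4) F2) where
  carrier := {p | ∃ t, p = Q (T t)}
  add_mem' := by
    rintro _ _ ⟨t, rfl⟩ ⟨s, rfl⟩
    refine ⟨t + s, ?_⟩
    simp only [Q_T, Pi.add_apply]
    module
  zero_mem' := ⟨0, by simp [Q_T]⟩
  smul_mem' := by
    rintro c _ ⟨t, rfl⟩
    refine ⟨c • t, ?_⟩
    simp only [Q_T, Pi.smul_apply, smul_eq_mul]
    module

lemma Q_JG0 : Q J = X 0 * X 1 ^ 2 + X 0 * X 2 ^ 2 + X 0 * X 3 ^ 2 +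
    (X 1 * X 0 ^ 2 + X 1 * X 2 ^ 2 + X 1 * X 3 ^ 2) +
    (X 2 * X 0 ^ 2 + X 2 * X 1 ^ 2 + X 2 * X 3 ^ 2) +
    (X 3 * X 0 ^ 2 + X 3 * X 1 ^ 2 + X 3 * X 2 ^ 2) := by
  simp [Q, J, Fin.sum_univ_four]

lemma Q_JG1 : Q (J * G) = X 0 * X 0 ^ 2 + X 0 * X 1 ^ 2 + (X 1 * X 0 ^ 2 + X 1 * X 2 ^ 2) +
    (X 2 * X 0 ^ 2 + X 2 * X 3 ^ 2) + (X 3 * X 1 ^ 2 + X 3 * X 2 ^ 2 + X 3 * X 3 ^ 2) := by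
  have e : J * G = !![1,1,0,0;1,0,1,0;1,0,0,1;0,1,1,1] := by decide +kernel
  simp [Q, e, Fin.sum_univ_four]

lemma Q_JG2 : Q (J * G ^ 2) = X 0 * X 1 ^ 2 + X 0 * X 2 ^ 2 + (X 1 * X 1 ^ 2 + X 1 * X 3 ^ 2) +
    (X 2 * X 0 ^ 2 + X 2 * X 2 ^ 2 + X 2 * X 3 ^ 2) + (X 3 * X 0 ^ 2 + X 3 * X 1 ^ 2) := by
  have e : J * G ^ 2 = !![0,1,1,0;0,1,0,1;1,0,1,1;1,1,0,0] := by decide +kernel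
  simp [Q, e, Fin.sum_univ_four]

lemma Q_JG3 : Q (J * G ^ 3) = X 0 * X 2 ^ 2 + X 0 * X 3 ^ 2 +
    (X 1 * X 0 ^ 2 + X 1 * X 1 ^ 2 + X 1 * X 3 ^ 2) +
    (X 2 * X 0 ^ 2 + X 2 * X 2 ^ 2) + (X 3 * X 1 ^ 2 + X 3 * X 2 ^ 2) := by
  have e : J * G ^ 3 = !![0,0,1,1;1,1,0,1;1,0,1,0;0,1,1,0] := by decide +kernel
  simp [Q, e, Fin.sum_univ_four]

/-- The images of the coordinates under the powers of `G`. -/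
def Y : Fin 5 → MvPolynomial (Fin 4) F2 := ![X 0, X 1, X 2, X 3, X 0 + X 1 + X 2 + X 3]

lemma act_G_X (i : Fin 4) : act G (X i) = Y (i.castSucc + 1) ∧ act (G ^ 2) (X i) = Y (i.castSucc + 2) ∧
    act (G ^ 3) (X i) = Y (i.castSucc + 3) ∧ act (G ^ 4) (X i) = Y (i.castSucc + 4) := by
  have e2 : G ^ 2 = !![0,0,1,0;0,0,0,1;1,1,1,1;1,0,0,0] := by decide +kernel
  have e3 : G ^ 3 = !![0,0,0,1;1,1,1,1;1,0,0,0;0,1,0,0] := by decide +kernel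
  have e4 : G ^ 4 = !![1,1,1,1;1,0,0,0;0,1,0,0;0,0,1,0] := by decide +kernel
  rw [e2, e3, e4]
  fin_cases i <;> simp [act_X', G, Fin.sum_univ_four] <;> refine ⟨?_, ?_, ?_, ?_⟩ <;> rfl

lemma Rey_mon (i j k : Fin 4) : Rey (X i * X j * X k) =
    X i * X j * X k + Y (i.castSucc + 1) * Y (j.castSucc + 1) * Y (k.castSucc + 1)
     + Y (i.castSucc + 2) * Y (j.castSucc + 2) * Y (k.castSucc + 2)
     + Y (i.castSucc + 3) * Y (j.castSucc + 3) * Y (k.castSucc + 3)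
     + Y (i.castSucc + 4) * Y (j.castSucc + 4) * Y (k.castSucc + 4) := by
  simp only [Rey, act_mul', act_G_X]

lemma two_eq : (2 : MvPolynomial (Fin 4) F2) = 0 := CharTwo.two_eq_zero

lemma Y0 : Y 0 = X 0 := rfl
lemma Y1 : Y 1 = X 1 := rfl
lemma Y2 : Y 2 = X 2 := rfl
lemma Y3 : Y 3 = X 3 := rfl
lemma Y4 : Y 4 = X 0 + X 1 + X 2 + X 3 := rfl

set_option linter.unusedSimpArgs false

lemma cyc_aux {i j k : Fin 4} (t : Fin 4 → F2) (m : MvPolynomial (Fin 4) F2)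
    (hm : X i * X j * X k + Y (i.castSucc + 1) * Y (j.castSucc + 1) * Y (k.castSucc + 1)
     + Y (i.castSucc + 2) * Y (j.castSucc + 2) * Y (k.castSucc + 2)
     + Y (i.castSucc + 3) * Y (j.castSucc + 3) * Y (k.castSucc + 3)
     + Y (i.castSucc + 4) * Y (j.castSucc + 4) * Y (k.castSucc + 4) = m)
    (h : m = Q (T t)) : Rey (X i * X j * X k) ∈ W :=
  ⟨t, by rw [Rey_mon, hm, h]⟩

lemma Rey_mem_000 : Rey (X 0 * X 0 * X 0) ∈ W := by
  have e : Q (T ![1, 0, 0, 0]) = Q J := by simp [Q_T]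
  refine cyc_aux ![1, 0, 0, 0] (X 0 * X 0 * X 0 + X 1 * X 1 * X 1 + X 2 * X 2 * X 2 + X 3 * X 3 * X 3 + (X 0 + X 1 + X 2 + X 3) * (X 0 + X 1 + X 2 + X 3) * (X 0 + X 1 + X 2 + X 3)) rfl ?_
  have h2 := two_eq
  rw [e]
  simp only [Q_JG0, Q_JG1, Q_JG2, Q_JG3]
  grind

lemma Rey_mem_001 : Rey (X 0 * X 0 * X 1) ∈ W := by
  have e : Q (T ![1, 1, 1, 1]) = Q J + Q (J * G) + Q (J * G ^ 2) + Q (J * G ^ 3) := by simp [Q_T]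
  refine cyc_aux ![1, 1, 1, 1] (X 0 * X 0 * X 1 + X 1 * X 1 * X 2 + X 2 * X 2 * X 3 + X 3 * X 3 * (X 0 + X 1 + X 2 + X 3) + (X 0 + X 1 + X 2 + X 3) * (X 0 + X 1 + X 2 + X 3) * X 0) rfl ?_
  have h2 := two_eq
  rw [e]
  simp only [Q_JG0, Q_JG1, Q_JG2, Q_JG3]
  grind

lemma Rey_mem_002 : Rey (X 0 * X 0 * X 2) ∈ W := by
  have e : Q (T ![0, 0, 0, 1]) = Q (J * G ^ 3) := by simp [Q_T]
  refine cyc_aux ![0, 0, 0, 1] (X 0 * X 0 * X 2 + X 1 * X 1 * X 3 + X 2 * X 2 * (X 0 + X 1 + X 2 + X 3) + X 3 * X 3 * X 0 + (X 0 + X 1 + X 2 + X 3) * (X 0 + X 1 + X 2 + X 3) * X 1) rfl ?_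
  have h2 := two_eq
  rw [e]
  simp only [Q_JG0, Q_JG1, Q_JG2, Q_JG3]
  grind

lemma Rey_mem_003 : Rey (X 0 * X 0 * X 3) ∈ W := by
  have e : Q (T ![0, 0, 1, 0]) = Q (J * G ^ 2) := by simp [Q_T]
  refine cyc_aux ![0, 0, 1, 0] (X 0 * X 0 * X 3 + X 1 * X 1 * (X 0 + X 1 + X 2 + X 3) + X 2 * X 2 * X 0 + X 3 * X 3 * X 1 + (X 0 + X 1 + X 2 + X 3) * (X 0 + X 1 + X 2 + X 3) * X 2) rfl ?_
  have h2 := two_eq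
  rw [e]
  simp only [Q_JG0, Q_JG1, Q_JG2, Q_JG3]
  grind

lemma Rey_mem_011 : Rey (X 0 * X 1 * X 1) ∈ W := by
  have e : Q (T ![0, 1, 0, 0]) = Q (J * G) := by simp [Q_T]
  refine cyc_aux ![0, 1, 0, 0] (X 0 * X 1 * X 1 + X 1 * X 2 * X 2 + X 2 * X 3 * X 3 + X 3 * (X 0 + X 1 + X 2 + X 3) * (X 0 + X 1 + X 2 + X 3) + (X 0 + X 1 + X 2 + X 3) * X 0 * X 0) rfl ?_
  have h2 := two_eq
  rw [e]
  simp only [Q_JG0, Q_JG1, Q_JG2, Q_JG3]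
  grind

lemma Rey_mem_012 : Rey (X 0 * X 1 * X 2) ∈ W := by
  have e : Q (T ![0, 0, 1, 1]) = Q (J * G ^ 2) + Q (J * G ^ 3) := by simp [Q_T]
  refine cyc_aux ![0, 0, 1, 1] (X 0 * X 1 * X 2 + X 1 * X 2 * X 3 + X 2 * X 3 * (X 0 + X 1 + X 2 + X 3) + X 3 * (X 0 + X 1 + X 2 + X 3) * X 0 + (X 0 + X 1 + X 2 + X 3) * X 0 * X 1) rfl ?_
  have h2 := two_eq
  rw [e]
  simp only [Q_JG0, Q_JG1, Q_JG2, Q_JG3]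
  grind

lemma Rey_mem_013 : Rey (X 0 * X 1 * X 3) ∈ W := by
  have e : Q (T ![1, 0, 1, 1]) = Q J + Q (J * G ^ 2) + Q (J * G ^ 3) := by simp [Q_T]
  refine cyc_aux ![1, 0, 1, 1] (X 0 * X 1 * X 3 + X 1 * X 2 * (X 0 + X 1 + X 2 + X 3) + X 2 * X 3 * X 0 + X 3 * (X 0 + X 1 + X 2 + X 3) * X 1 + (X 0 + X 1 + X 2 + X 3) * X 0 * X 2) rfl ?_
  have h2 := two_eq
  rw [e]
  simp only [Q_JG0, Q_JG1, Q_JG2, Q_JG3]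
  grind

lemma Rey_mem_022 : Rey (X 0 * X 2 * X 2) ∈ W := by
  have e : Q (T ![0, 0, 1, 0]) = Q (J * G ^ 2) := by simp [Q_T]
  refine cyc_aux ![0, 0, 1, 0] (X 0 * X 2 * X 2 + X 1 * X 3 * X 3 + X 2 * (X 0 + X 1 + X 2 + X 3) * (X 0 + X 1 + X 2 + X 3) + X 3 * X 0 * X 0 + (X 0 + X 1 + X 2 + X 3) * X 1 * X 1) rfl ?_
  have h2 := two_eq
  rw [e]
  simp only [Q_JG0, Q_JG1, Q_JG2, Q_JG3]
  grind

lemma Rey_mem_023 : Rey (X 0 * X 2 * X 3) ∈ W := by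
  have e : Q (T ![1, 0, 1, 1]) = Q J + Q (J * G ^ 2) + Q (J * G ^ 3) := by simp [Q_T]
  refine cyc_aux ![1, 0, 1, 1] (X 0 * X 2 * X 3 + X 1 * X 3 * (X 0 + X 1 + X 2 + X 3) + X 2 * (X 0 + X 1 + X 2 + X 3) * X 0 + X 3 * X 0 * X 1 + (X 0 + X 1 + X 2 + X 3) * X 1 * X 2) rfl ?_
  have h2 := two_eq
  rw [e]
  simp only [Q_JG0, Q_JG1, Q_JG2, Q_JG3]
  grind

lemma Rey_mem_033 : Rey (X 0 * X 3 * X 3) ∈ W := by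
  have e : Q (T ![0, 0, 0, 1]) = Q (J * G ^ 3) := by simp [Q_T]
  refine cyc_aux ![0, 0, 0, 1] (X 0 * X 3 * X 3 + X 1 * (X 0 + X 1 + X 2 + X 3) * (X 0 + X 1 + X 2 + X 3) + X 2 * X 0 * X 0 + X 3 * X 1 * X 1 + (X 0 + X 1 + X 2 + X 3) * X 2 * X 2) rfl ?_
  have h2 := two_eq
  rw [e]
  simp only [Q_JG0, Q_JG1, Q_JG2, Q_JG3]
  grind

lemma Rey_mem_111 : Rey (X 1 * X 1 * X 1) ∈ W := by
  have e : Q (T ![1, 0, 0, 0]) = Q J := by simp [Q_T]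
  refine cyc_aux ![1, 0, 0, 0] (X 1 * X 1 * X 1 + X 2 * X 2 * X 2 + X 3 * X 3 * X 3 + (X 0 + X 1 + X 2 + X 3) * (X 0 + X 1 + X 2 + X 3) * (X 0 + X 1 + X 2 + X 3) + X 0 * X 0 * X 0) rfl ?_
  have h2 := two_eq
  rw [e]
  simp only [Q_JG0, Q_JG1, Q_JG2, Q_JG3]
  grind

lemma Rey_mem_112 : Rey (X 1 * X 1 * X 2) ∈ W := by
  have e : Q (T ![1, 1, 1, 1]) = Q J + Q (J * G) + Q (J * G ^ 2) + Q (J * G ^ 3) := by simp [Q_T]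
  refine cyc_aux ![1, 1, 1, 1] (X 1 * X 1 * X 2 + X 2 * X 2 * X 3 + X 3 * X 3 * (X 0 + X 1 + X 2 + X 3) + (X 0 + X 1 + X 2 + X 3) * (X 0 + X 1 + X 2 + X 3) * X 0 + X 0 * X 0 * X 1) rfl ?_
  have h2 := two_eq
  rw [e]
  simp only [Q_JG0, Q_JG1, Q_JG2, Q_JG3]
  grind

lemma Rey_mem_113 : Rey (X 1 * X 1 * X 3) ∈ W := by
  have e : Q (T ![0, 0, 0, 1]) = Q (J * G ^ 3) := by simp [Q_T]
  refine cyc_aux ![0, 0, 0, 1] (X 1 * X 1 * X 3 + X 2 * X 2 * (X 0 + X 1 + X 2 + X 3) + X 3 * X 3 * X 0 + (X 0 + X 1 + X 2 + X 3) * (X 0 + X 1 + X 2 + X 3) * X 1 + X 0 * X 0 * X 2) rfl ?_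
  have h2 := two_eq
  rw [e]
  simp only [Q_JG0, Q_JG1, Q_JG2, Q_JG3]
  grind

lemma Rey_mem_122 : Rey (X 1 * X 2 * X 2) ∈ W := by
  have e : Q (T ![0, 1, 0, 0]) = Q (J * G) := by simp [Q_T]
  refine cyc_aux ![0, 1, 0, 0] (X 1 * X 2 * X 2 + X 2 * X 3 * X 3 + X 3 * (X 0 + X 1 + X 2 + X 3) * (X 0 + X 1 + X 2 + X 3) + (X 0 + X 1 + X 2 + X 3) * X 0 * X 0 + X 0 * X 1 * X 1) rfl ?_
  have h2 := two_eq
  rw [e]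
  simp only [Q_JG0, Q_JG1, Q_JG2, Q_JG3]
  grind

lemma Rey_mem_123 : Rey (X 1 * X 2 * X 3) ∈ W := by
  have e : Q (T ![0, 0, 1, 1]) = Q (J * G ^ 2) + Q (J * G ^ 3) := by simp [Q_T]
  refine cyc_aux ![0, 0, 1, 1] (X 1 * X 2 * X 3 + X 2 * X 3 * (X 0 + X 1 + X 2 + X 3) + X 3 * (X 0 + X 1 + X 2 + X 3) * X 0 + (X 0 + X 1 + X 2 + X 3) * X 0 * X 1 + X 0 * X 1 * X 2) rfl ?_
  have h2 := two_eq
  rw [e]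
  simp only [Q_JG0, Q_JG1, Q_JG2, Q_JG3]
  grind

lemma Rey_mem_133 : Rey (X 1 * X 3 * X 3) ∈ W := by
  have e : Q (T ![0, 0, 1, 0]) = Q (J * G ^ 2) := by simp [Q_T]
  refine cyc_aux ![0, 0, 1, 0] (X 1 * X 3 * X 3 + X 2 * (X 0 + X 1 + X 2 + X 3) * (X 0 + X 1 + X 2 + X 3) + X 3 * X 0 * X 0 + (X 0 + X 1 + X 2 + X 3) * X 1 * X 1 + X 0 * X 2 * X 2) rfl ?_
  have h2 := two_eq
  rw [e]
  simp only [Q_JG0, Q_JG1, Q_JG2, Q_JG3]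
  grind

lemma Rey_mem_222 : Rey (X 2 * X 2 * X 2) ∈ W := by
  have e : Q (T ![1, 0, 0, 0]) = Q J := by simp [Q_T]
  refine cyc_aux ![1, 0, 0, 0] (X 2 * X 2 * X 2 + X 3 * X 3 * X 3 + (X 0 + X 1 + X 2 + X 3) * (X 0 + X 1 + X 2 + X 3) * (X 0 + X 1 + X 2 + X 3) + X 0 * X 0 * X 0 + X 1 * X 1 * X 1) rfl ?_
  have h2 := two_eq
  rw [e]
  simp only [Q_JG0, Q_JG1, Q_JG2, Q_JG3]
  grind

lemma Rey_mem_223 : Rey (X 2 * X 2 * X 3) ∈ W := by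
  have e : Q (T ![1, 1, 1, 1]) = Q J + Q (J * G) + Q (J * G ^ 2) + Q (J * G ^ 3) := by simp [Q_T]
  refine cyc_aux ![1, 1, 1, 1] (X 2 * X 2 * X 3 + X 3 * X 3 * (X 0 + X 1 + X 2 + X 3) + (X 0 + X 1 + X 2 + X 3) * (X 0 + X 1 + X 2 + X 3) * X 0 + X 0 * X 0 * X 1 + X 1 * X 1 * X 2) rfl ?_
  have h2 := two_eq
  rw [e]
  simp only [Q_JG0, Q_JG1, Q_JG2, Q_JG3]
  grind

lemma Rey_mem_233 : Rey (X 2 * X 3 * X 3) ∈ W := by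
  have e : Q (T ![0, 1, 0, 0]) = Q (J * G) := by simp [Q_T]
  refine cyc_aux ![0, 1, 0, 0] (X 2 * X 3 * X 3 + X 3 * (X 0 + X 1 + X 2 + X 3) * (X 0 + X 1 + X 2 + X 3) + (X 0 + X 1 + X 2 + X 3) * X 0 * X 0 + X 0 * X 1 * X 1 + X 1 * X 2 * X 2) rfl ?_
  have h2 := two_eq
  rw [e]
  simp only [Q_JG0, Q_JG1, Q_JG2, Q_JG3]
  grind

lemma Rey_mem_333 : Rey (X 3 * X 3 * X 3) ∈ W := by
  have e : Q (T ![1, 0, 0, 0]) = Q J := by simp [Q_T]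
  refine cyc_aux ![1, 0, 0, 0] (X 3 * X 3 * X 3 + (X 0 + X 1 + X 2 + X 3) * (X 0 + X 1 + X 2 + X 3) * (X 0 + X 1 + X 2 + X 3) + X 0 * X 0 * X 0 + X 1 * X 1 * X 1 + X 2 * X 2 * X 2) rfl ?_
  have h2 := two_eq
  rw [e]
  simp only [Q_JG0, Q_JG1, Q_JG2, Q_JG3]
  grind

lemma Rey_mem_le (i j k : Fin 4) (hij : i ≤ j) (hjk : j ≤ k) : Rey (X i * X j * X k) ∈ W := by
  fin_cases i <;> fin_cases j <;> first | (exfalso; revert hij; decide) | skip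
  all_goals fin_cases k <;> first | (exfalso; revert hjk; decide) | skip
  exacts [Rey_mem_000, Rey_mem_001, Rey_mem_002, Rey_mem_003, Rey_mem_011, Rey_mem_012,
    Rey_mem_013, Rey_mem_022, Rey_mem_023, Rey_mem_033, Rey_mem_111, Rey_mem_112, Rey_mem_113,
    Rey_mem_122, Rey_mem_123, Rey_mem_133, Rey_mem_222, Rey_mem_223, Rey_mem_233, Rey_mem_333]

lemma Rey_mem (i j k : Fin 4) : Rey (X i * X j * X k) ∈ W := by
  have e1 : (X i * X j * X k : MvPolynomial (Fin 4) F2) = X i * X k * X j := by ring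
  have e2 : (X i * X j * X k : MvPolynomial (Fin 4) F2) = X j * X i * X k := by ring
  have e3 : (X i * X j * X k : MvPolynomial (Fin 4) F2) = X j * X k * X i := by ring
  have e4 : (X i * X j * X k : MvPolynomial (Fin 4) F2) = X k * X i * X j := by ring
  have e5 : (X i * X j * X k : MvPolynomial (Fin 4) F2) = X k * X j * X i := by ring
  rcases le_total i j with h1 | h1 <;> rcases le_total j k with h2 | h2 <;>
    rcases le_total i k with h3 | h3
  · exact Rey_mem_le i j k h1 h2
  · exact Rey_mem_le i j k h1 h2
  · rw [e1]; exact Rey_mem_le i k j h3 h2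
  · rw [e4]; exact Rey_mem_le k i j h3 h1
  · rw [e2]; exact Rey_mem_le j i k h1 h3
  · rw [e3]; exact Rey_mem_le j k i h2 h3
  · rw [e5]; exact Rey_mem_le k j i h2 h1
  · rw [e5]; exact Rey_mem_le k j i h2 h1

/-- `Rey` as a linear map. -/
def ReyL : MvPolynomial (Fin 4) F2 →ₗ[F2] MvPolynomial (Fin 4) F2 where
  toFun := Rey
  map_add' p q := by simp only [Rey, act_add']; ring
  map_smul' c p := by simp only [Rey, act_smul', smul_add, RingHom.id_apply]

lemma Rey_mem_of_homogeneous (f : MvPolynomial (Fin 4) F2) (hf : f.IsHomogeneous 3) :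
    Rey f ∈ W := by
  have h1 : f ∈ homogeneousSubmodule (Fin 4) F2 3 := hf
  rw [← homogeneousSubmodule_one_pow, homogeneousSubmodule_one_eq_span_X, pow_succ, pow_two,
    Submodule.span_mul_span, Submodule.span_mul_span] at h1
  refine (show _ ≤ W.comap ReyL from ?_) h1
  rw [Submodule.span_le]
  rintro _ ⟨_, ⟨_, ⟨i, rfl⟩, _, ⟨j, rfl⟩, rfl⟩, _, ⟨k, rfl⟩, rfl⟩
  exact Rey_mem i j k

lemma eq_Q_of_fixed (f : MvPolynomial (Fin 4) F2) (hf : f.IsHomogeneous 3) (hG : act G f = f) :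
    ∃ t, f = Q (T t) := by
  obtain ⟨t, ht⟩ := Rey_mem_of_homogeneous f hf
  refine ⟨t, ht.symm.trans ?_ |>.symm⟩
  have h2 : act (G ^ 2) f = f := by rw [pow_two, ← act_act, hG, hG]
  have h3 : act (G ^ 3) f = f := by rw [pow_succ, ← act_act, h2, hG]
  have h4 : act (G ^ 4) f = f := by rw [pow_succ, ← act_act, h3, hG]
  simp only [Rey, hG, h2, h3, h4]
  linear_combination 2 * f * two_eq

lemma mem_stab (f : MvPolynomial (Fin 4) F2) (g : GL (Fin 4) F2) :
    g ∈ stab f ↔ act (g : Matrix (Fin 4) (Fin 4) F2) f = f := Iff.rfl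

lemma mem_stab_act (f : MvPolynomial (Fin 4) F2) (k g : GL (Fin 4) F2) :
    g ∈ stab (act k f) ↔ k * g * k⁻¹ ∈ stab f := by
  rw [mem_stab, mem_stab, act_act]
  have e : act (((k * g * k⁻¹ : GL (Fin 4) F2)) : Matrix (Fin 4) (Fin 4) F2) f =
      act (k⁻¹ : GL (Fin 4) F2) (act (k * g : Matrix (Fin 4) (Fin 4) F2) f) := by
    rw [act_act]; rfl
  rw [e]
  constructor
  · intro h
    rw [h, act_act, Units.mul_inv, act_one]
  · intro h
    have := congrArg (act (k : Matrix (Fin 4) (Fin 4) F2)) h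
    rwa [act_act, Units.inv_mul, act_one] at this

lemma stab_act_equiv (f : MvPolynomial (Fin 4) F2) (k : GL (Fin 4) F2) :
    Nonempty (stab (act k f) ≃* stab f) := by
  have e : stab f = (stab (act k f)).map (MulAut.conj k).toMonoidHom := by
    ext g
    constructor
    · intro hg
      refine ⟨k⁻¹ * g * k, (mem_stab_act f k _).2 ?_, ?_⟩
      · simpa [mul_assoc] using hg
      · simp [mul_assoc]
    · rintro ⟨g, hg, rfl⟩
      exact (mem_stab_act f k _).1 hg
  rw [e]
  exact ⟨(stab (act k f)).equivMapOfInjective _ (MulAut.conj k).injective⟩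

lemma Q_coeff (A : Matrix (Fin 4) (Fin 4) F2) (i j : Fin 4) :
    coeff (Finsupp.single i 1 + Finsupp.single j 2) (Q A) = A i j := by
  have e : ∀ k l : Fin 4, (X k * X l ^ 2 : MvPolynomial (Fin 4) F2) =
      monomial (Finsupp.single k 1 + Finsupp.single l 2) 1 := by
    intro k l
    rw [X_pow_eq_monomial, X, monomial_mul, one_mul]
  have inj : ∀ k l : Fin 4, (Finsupp.single k 1 + Finsupp.single l 2 =
      Finsupp.single i 1 + Finsupp.single j 2) ↔ (k = i ∧ l = j) := by
    intro k l
    constructor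
    · intro h
      have h' : ∀ a : Fin 4, (if k = a then 1 else 0) + (if l = a then 2 else 0) =
          (if i = a then 1 else 0) + (if j = a then 2 else 0) := by
        intro a
        simpa [Finsupp.single_apply] using DFunLike.congr_fun h a
      revert h'
      clear h e
      revert i j k l
      decide +kernel
    · rintro ⟨rfl, rfl⟩; rfl
  simp only [Q, coeff_sum, coeff_smul, e, coeff_monomial, inj, ite_and]
  simp

lemma Q_inj {A B : Matrix (Fin 4) (Fin 4) F2} (h : Q A = Q B) : A = B := by
  ext i j
  rw [← Q_coeff A, h, Q_coeff]

lemma mem_stab_Q (A : Matrix (Fin 4) (Fin 4) F2) (g : GL (Fin 4) F2) :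
    g ∈ stab (Q A) ↔ (g : Matrix (Fin 4) (Fin 4) F2).transpose * A * g = A := by
  rw [mem_stab, act_Q]
  exact ⟨Q_inj, congrArg Q⟩

/-- A stabilizer commuting with `G` is small. -/
lemma card_le_of_comm (H : Subgroup (GL (Fin 4) F2))
    (hc : ∀ h ∈ H, (h : Matrix (Fin 4) (Fin 4) F2) * G = G * h) : Nat.card H ≤ 16 := by
  have inj : Function.Injective (fun h : H => (fun j => (h : GL (Fin 4) F2).1 0 j : Fin 4 → F2)) := by
    intro a b hab
    have row : ∀ h : H, ∀ i : Fin 3, ∀ j, (h : GL (Fin 4) F2).1 i.succ j =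
        ∑ l, (h : GL (Fin 4) F2).1 i.castSucc l * G l j := by
      intro h i j
      have := congrFun (congrFun (hc h h.2) i.castSucc) j
      rw [Matrix.mul_apply, Matrix.mul_apply] at this
      rw [this]
      fin_cases i <;> simp [G, Fin.sum_univ_four]
    have r0 : ∀ j, (a : GL (Fin 4) F2).1 0 j = (b : GL (Fin 4) F2).1 0 j := congrFun hab
    have r1 : ∀ j, (a : GL (Fin 4) F2).1 1 j = (b : GL (Fin 4) F2).1 1 j := by
      intro j
      refine (row a 0 j).trans (Eq.trans ?_ (row b 0 j).symm)
      exact Finset.sum_congr rfl fun l _ => congrArg (· * G l j) (r0 l)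
    have r2 : ∀ j, (a : GL (Fin 4) F2).1 2 j = (b : GL (Fin 4) F2).1 2 j := by
      intro j
      refine (row a 1 j).trans (Eq.trans ?_ (row b 1 j).symm)
      exact Finset.sum_congr rfl fun l _ => congrArg (· * G l j) (r1 l)
    have r3 : ∀ j, (a : GL (Fin 4) F2).1 3 j = (b : GL (Fin 4) F2).1 3 j := by
      intro j
      refine (row a 2 j).trans (Eq.trans ?_ (row b 2 j).symm)
      exact Finset.sum_congr rfl fun l _ => congrArg (· * G l j) (r2 l)
    apply Subtype.ext
    apply Units.ext
    ext i j
    fin_cases i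
    exacts [r0 j, r1 j, r2 j, r3 j]
  have := Nat.card_le_card_of_injective _ inj
  simpa using this

lemma comm_of_asym (A h : Matrix (Fin 4) (Fin 4) F2) (k : Fin 4) (n : ℕ) (hA : A ^ (n + 1) = 1)
    (hk : A * G ^ (k.val + 1) = A.transpose) (hu : IsUnit h) (hh : h.transpose * A * h = A) :
    h * G = G * h := by
  have hAu : IsUnit A := IsUnit.of_pow_eq_one hA n.succ_ne_zero
  have hT : h.transpose * A.transpose * h = A.transpose := by
    have := congrArg Matrix.transpose hh
    simpa [Matrix.transpose_mul, Matrix.mul_assoc] using this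
  have hut : IsUnit h.transpose := by
    rw [Matrix.isUnit_iff_isUnit_det, Matrix.det_transpose]
    exact (Matrix.isUnit_iff_isUnit_det _).1 hu
  have key : h * G ^ (k.val + 1) = G ^ (k.val + 1) * h := by
    apply (hut.mul hAu).mul_left_cancel
    calc h.transpose * A * (h * G ^ (k.val + 1)) = (h.transpose * A * h) * G ^ (k.val + 1) := by
          simp only [Matrix.mul_assoc]
      _ = A.transpose := by rw [hh, hk]
      _ = h.transpose * A.transpose * h := hT.symm
      _ = h.transpose * A * (G ^ (k.val + 1) * h) := by rw [← hk]; simp only [Matrix.mul_assoc]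
  have hc : Commute h (G ^ (k.val + 1)) := key
  have hG : ∃ m : ℕ, (G ^ (k.val + 1)) ^ m = G := by
    revert k
    have : ∀ k : Fin 4, ∃ m : Fin 5, (G ^ (k.val + 1)) ^ m.val = G := by decide +kernel
    intro k _ _ _
    obtain ⟨m, hm⟩ := this k
    exact ⟨m, hm⟩
  obtain ⟨m, hm⟩ := hG
  have := hc.pow_right m
  rw [hm] at this
  exact this

lemma card_GL4 : Nat.card (GL (Fin 4) F2) = 20160 := by
  rw [Matrix.card_GL_field]
  simp [Fin.prod_univ_four, ZMod.card]

lemma exists_conj (H : Subgroup (GL (Fin 4) F2)) (h : Nat.card H = 720) (g₀ : GL (Fin 4) F2)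
    (h₀ : orderOf g₀ = 5) : ∃ k : GL (Fin 4) F2, k * g₀ * k⁻¹ ∈ H := by
  have : Fact (Nat.Prime 5) := ⟨by norm_num⟩
  obtain ⟨x, hx⟩ := exists_prime_orderOf_dvd_card' (G := H) 5 (by rw [h]; norm_num)
  have hf : (Nat.card (GL (Fin 4) F2)).factorization 5 = 1 := by
    rw [card_GL4]
    have e : (20160 : ℕ) = 5 * 4032 := by norm_num
    rw [Nat.factorization_def _ (by norm_num), e, padicValNat.mul (by norm_num) (by norm_num),
      padicValNat.self (by norm_num), padicValNat.eq_zero_of_not_dvd (by norm_num)]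
  let P : Sylow 5 (GL (Fin 4) F2) := Sylow.ofCard (Subgroup.zpowers (x : GL (Fin 4) F2))
    (by rw [Nat.card_zpowers, Subgroup.orderOf_coe, hx, hf, pow_one])
  let P' : Sylow 5 (GL (Fin 4) F2) := Sylow.ofCard (Subgroup.zpowers g₀)
    (by rw [Nat.card_zpowers, h₀, hf, pow_one])
  obtain ⟨k, hk⟩ := MulAction.exists_smul_eq (GL (Fin 4) F2) P' P
  refine ⟨k, ?_⟩
  have h1 : k * g₀ * k⁻¹ ∈ (P : Subgroup (GL (Fin 4) F2)) := by
    rw [← hk]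
    exact Subgroup.smul_mem_pointwise_smul (α := MulAut (GL (Fin 4) F2)) _ (MulAut.conj k) _ (Subgroup.mem_zpowers g₀)
  have h2 : (P : Subgroup (GL (Fin 4) F2)) ≤ H := by
    show Subgroup.zpowers (x : GL (Fin 4) F2) ≤ H
    rw [Subgroup.zpowers_le]
    exact x.2
  exact h2 h1

/-- The basis vector `e j + e 4` of the sum-zero space modulo the all-one vector. -/
def vv (j : Fin 4) (a : Fin 6) : F2 := (if a = j.castSucc.castSucc then 1 else 0) + (if a = 4 then 1 else 0)

lemma vv_sum (j : Fin 4) : ∑ a, vv j a = 0 := by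
  revert j; decide +kernel

/-- The matrix of a permutation on the sum-zero space modulo the all-one vector. -/
def MM (σ : Equiv.Perm (Fin 6)) : Matrix (Fin 4) (Fin 4) F2 :=
  fun i j => vv j (σ⁻¹ i.castSucc.castSucc) + vv j (σ⁻¹ 5)

lemma expand (w : Fin 6 → F2) (hw : ∑ a, w a = 0) (p q : Fin 6) :
    ∑ k : Fin 4, (vv k p + vv k q) * (w k.castSucc.castSucc + w 5) = w p + w q := by
  revert w p q
  decide +kernel

lemma pairing_aux {R : Type*} [CommRing R] (h2 : (2 : R) = 0)
    (u0 u1 u2 u3 u4 u5 w0 w1 w2 w3 w4 w5 : R)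
    (hu : u0 + u1 + u2 + u3 + u4 + u5 = 0) (hw : w0 + w1 + w2 + w3 + w4 + w5 = 0) :
    (u1 + u5 + (u2 + u5) + (u3 + u5)) * (w0 + w5) + (u0 + u5 + (u2 + u5) + (u3 + u5)) * (w1 + w5) +
      (u0 + u5 + (u1 + u5) + (u3 + u5)) * (w2 + w5) + (u0 + u5 + (u1 + u5) + (u2 + u5)) * (w3 + w5) =
    u0 * w0 + u1 * w1 + u2 * w2 + u3 * w3 + u4 * w4 + u5 * w5 := by
  have hu4 : u4 = u0 + u1 + u2 + u3 + u5 := by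
    linear_combination hu - (u0 + u1 + u2 + u3 + u5) * h2
  have hw4 : w4 = w0 + w1 + w2 + w3 + w5 := by
    linear_combination hw - (w0 + w1 + w2 + w3 + w5) * h2
  subst hu4 hw4
  clear hu hw
  grind

lemma pairing (u w : Fin 6 → F2) (hu : ∑ a, u a = 0) (hw : ∑ a, w a = 0) :
    ∑ l : Fin 4, (∑ k : Fin 4, (u k.castSucc.castSucc + u 5) * J k l) *
      (w l.castSucc.castSucc + w 5) = ∑ a, u a * w a := by
  rw [Fin.sum_univ_six] at hu hw
  have := pairing_aux (R := F2) rfl _ _ _ _ _ _ _ _ _ _ _ _ hu hw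
  simpa [Fin.sum_univ_six, Fin.sum_univ_four, J] using this

lemma MM_mul (σ τ : Equiv.Perm (Fin 6)) : MM (σ * τ) = MM σ * MM τ := by
  ext i j
  rw [Matrix.mul_apply]
  have := expand (fun a => vv j (τ⁻¹ a))
    ((Equiv.sum_comp τ⁻¹ (vv j)).trans (vv_sum j)) (σ⁻¹ i.castSucc.castSucc) (σ⁻¹ 5)
  refine Eq.trans ?_ this.symm
  simp [MM, mul_inv_rev]

lemma MM_one : MM 1 = 1 := by
  have e : Matrix.of (fun i j : Fin 4 => vv j i.castSucc.castSucc + vv j 5) =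
      (1 : Matrix (Fin 4) (Fin 4) F2) := by
    decide +kernel
  exact e

lemma MM_J (σ : Equiv.Perm (Fin 6)) : (MM σ).transpose * J * MM σ = J := by
  have hJ' : Matrix.of (fun i j : Fin 4 => ∑ a, vv i a * vv j a) = J := by decide +kernel
  have hJ (i j : Fin 4) : ∑ a, vv i a * vv j a = J i j := congrFun (congrFun hJ' i) j
  ext i j
  simp only [Matrix.mul_apply, Matrix.transpose_apply]
  have := pairing (fun a => vv i (σ⁻¹ a)) (fun a => vv j (σ⁻¹ a))
    ((Equiv.sum_comp σ⁻¹ (vv i)).trans (vv_sum i)) ((Equiv.sum_comp σ⁻¹ (vv j)).trans (vv_sum j))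
  refine Eq.trans this ?_
  rw [← hJ]
  exact Equiv.sum_comp σ⁻¹ (fun a => vv i a * vv j a)

lemma MM_ker (σ : Equiv.Perm (Fin 6)) (h : MM σ = 1) : σ = 1 := by
  have h' : ∀ i j : Fin 4, vv j (σ⁻¹ i.castSucc.castSucc) + vv j (σ⁻¹ 5) =
      (1 : Matrix (Fin 4) (Fin 4) F2) i j := fun i j => congrFun (congrFun h i) j
  have key : ∀ (i : Fin 4) (p q : Fin 6),
      (∀ j, vv j p + vv j q = (1 : Matrix (Fin 4) (Fin 4) F2) i j) →
      (p = i.castSucc.castSucc ∧ q = 5) ∨ (p = 5 ∧ q = i.castSucc.castSucc) := by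
    decide +kernel
  have k (i : Fin 4) := key i _ _ (h' i)
  have k0 := k 0
  have k1 := k 1
  have h5 : σ⁻¹ 5 = 5 := by
    rcases k0 with h0 | h0
    · exact h0.2
    · rcases k1 with h1 | h1
      · exact h1.2
      · exact absurd (h0.2.symm.trans h1.2) (by decide)
  have hi : ∀ i : Fin 4, σ⁻¹ i.castSucc.castSucc = i.castSucc.castSucc := by
    intro i
    rcases k i with h0 | h0
    · exact h0.1
    · have := h0.2.symm.trans h5
      exact absurd this (by clear h0 this; revert i; decide)
  have h0 : σ⁻¹ 0 = 0 := hi 0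
  have h1 : σ⁻¹ 1 = 1 := hi 1
  have h2 : σ⁻¹ 2 = 2 := hi 2
  have h3 : σ⁻¹ 3 = 3 := hi 3
  have h4 : σ⁻¹ 4 = 4 := by
    have n0 : σ⁻¹ 4 ≠ 0 := fun e => absurd (σ⁻¹.injective (e.trans h0.symm)) (by decide)
    have n1 : σ⁻¹ 4 ≠ 1 := fun e => absurd (σ⁻¹.injective (e.trans h1.symm)) (by decide)
    have n2 : σ⁻¹ 4 ≠ 2 := fun e => absurd (σ⁻¹.injective (e.trans h2.symm)) (by decide)
    have n3 : σ⁻¹ 4 ≠ 3 := fun e => absurd (σ⁻¹.injective (e.trans h3.symm)) (by decide)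
    have n5 : σ⁻¹ 4 ≠ 5 := fun e => absurd (σ⁻¹.injective (e.trans h5.symm)) (by decide)
    omega
  rw [← inv_eq_one]
  ext1 a
  fin_cases a
  exacts [h0, h1, h2, h3, h4, h5]

/-- The homomorphism `S₆ → GL₄(𝔽₂)`. -/
def MHom : Equiv.Perm (Fin 6) →* GL (Fin 4) F2 :=
  MonoidHom.toHomUnits { toFun := MM, map_one' := MM_one, map_mul' := MM_mul }

lemma MHom_coe (σ : Equiv.Perm (Fin 6)) : (MHom σ : Matrix (Fin 4) (Fin 4) F2) = MM σ := rfl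

lemma stab_QJ (h : Nat.card (stab (Q J)) = 720) :
    Nonempty (stab (Q J) ≃* Equiv.Perm (Fin 6)) := by
  have hm : ∀ σ, MHom σ ∈ stab (Q J) := fun σ => (mem_stab_Q J _).2 (MM_J σ)
  let φ : Equiv.Perm (Fin 6) →* stab (Q J) := MHom.codRestrict _ hm
  have inj : Function.Injective φ := by
    rw [injective_iff_map_eq_one]
    intro σ hσ
    apply MM_ker
    have := congrArg (fun x : stab (Q J) => ((x : GL (Fin 4) F2) : Matrix (Fin 4) (Fin 4) F2)) hσ
    exact this
  have hc : Nat.card (Equiv.Perm (Fin 6)) = Nat.card (stab (Q J)) := by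
    rw [h, Nat.card_perm, Nat.card_fin]; rfl
  have bij : Function.Bijective φ := (Nat.bijective_iff_injective_and_card φ).2 ⟨inj, hc⟩
  exact ⟨(MulEquiv.ofBijective φ bij).symm⟩

/-- The order-five matrix as a unit. -/
def Gu : GL (Fin 4) F2 := ⟨G, G ^ 4, by rw [← pow_succ', G5], by rw [← pow_succ, G5]⟩

lemma Gu_order : orderOf Gu = 5 := by
  have : Fact (Nat.Prime 5) := ⟨by norm_num⟩
  apply orderOf_eq_prime
  · apply Units.ext
    exact G5
  · intro h
    have h1 : G = 1 := congrArg Units.val h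
    exact absurd h1 (by decide +kernel)

lemma one_add_G_unit : IsUnit (1 + G) :=
  IsUnit.of_pow_eq_one (n := 15) (by decide +kernel) (by norm_num)

lemma one_add_G2_unit : IsUnit (1 + G ^ 2) :=
  IsUnit.of_pow_eq_one (n := 15) (by decide +kernel) (by norm_num)

lemma iso_of_act_QJ (A : Matrix (Fin 4) (Fin 4) F2) (k : GL (Fin 4) F2)
    (hA : A = (k : Matrix (Fin 4) (Fin 4) F2).transpose * J * k) (h : Nat.card (stab (Q A)) = 720) :
    Nonempty (stab (Q A) ≃* Equiv.Perm (Fin 6)) := by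
  have e : Q A = act k (Q J) := by rw [act_Q, hA]
  rw [e] at h ⊢
  obtain ⟨ψ⟩ := stab_act_equiv (Q J) k
  obtain ⟨χ⟩ := stab_QJ (by rw [← h]; exact (Nat.card_congr ψ.toEquiv).symm)
  exact ⟨ψ.trans χ⟩

lemma iso_of_Q (t : Fin 4 → F2) (h : Nat.card (stab (Q (T t))) = 720) :
    Nonempty (stab (Q (T t)) ≃* Equiv.Perm (Fin 6)) := by
  rcases T_nonsym t with ht | ht | ht | ht | ⟨⟨n, hn⟩, k, hk⟩
  · exfalso
    have e : stab (Q (T t)) = ⊤ := by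
      rw [eq_top_iff]
      intro g _
      rw [mem_stab_Q, ht]
      simp [T]
    rw [e, Subgroup.card_top, card_GL4] at h
    norm_num at h
  · exact iso_of_act_QJ _ 1 (by simp [ht]) h
  · obtain ⟨u, hu⟩ := one_add_G_unit
    exact iso_of_act_QJ _ u (by rw [hu, ht]) h
  · obtain ⟨u, hu⟩ := one_add_G2_unit
    exact iso_of_act_QJ _ u (by rw [hu, ht]) h
  · exfalso
    have := card_le_of_comm (stab (Q (T t))) (fun g hg =>
      comm_of_asym (T t) g k n hn hk g.isUnit ((mem_stab_Q _ _).1 hg))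
    omega

/-- if the stabilizer of a smooth cubic form over `𝔽₂` has order exactly `720`,
then it is isomorphic to the symmetric group `S₆`. -/
theorem stab_card_eq_720_iso_S6 (f : MvPolynomial (Fin 4) F2) (hf : IsSmoothCubic f)
    (h : Nat.card (stab f) = 720) :
    Nonempty (stab f ≃* Equiv.Perm (Fin 6)) := by
  obtain ⟨k, hk⟩ := exists_conj (stab f) h Gu Gu_order
  rw [← mem_stab_act] at hk
  have hom : (act k f).IsHomogeneous 3 := by
    have := hf.1.aeval (fun i => ∑ j, (k : Matrix (Fin 4) (Fin 4) F2) i j •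
      (X j : MvPolynomial (Fin 4) F2)) (n := 1) ?_
    · simpa [act] using this
    · intro i
      refine IsHomogeneous.sum _ _ _ fun j _ => ?_
      rw [smul_eq_C_mul]
      exact (isHomogeneous_X F2 j).C_mul _
  obtain ⟨t, ht⟩ := eq_Q_of_fixed _ hom hk
  obtain ⟨ψ⟩ := stab_act_equiv f k
  rw [ht] at ψ
  obtain ⟨χ⟩ := iso_of_Q t ((Nat.card_congr ψ.toEquiv).trans h)
  exact ⟨ψ.symm.trans χ⟩
end
end

section
/- Let Ω be the 4×4 antidiagonal matrix over 𝔽₂ with entries Ω₁₄ = Ω₂₃ = Ω₃₂ = Ω₄₁ = 1 and all other entries 0. Then every g ∈ GL₄(𝔽₂) satisfying gᵀΩg = Ω preserves the cubic form c₀ = x²t + y²z + yz² + xt², i.e., c₀ ∘ g = c₀. In other words, the symplectic group Sp₄(𝔽₂) defined by Ω is contained in the stabilizer of c₀ in GL₄(𝔽₂). -/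
open MvPolynomial

noncomputable section

open Matrix in
/-- The antidiagonal matrix `Ω` over `𝔽₂`. -/
def Omega : Matrix (Fin 4) (Fin 4) F2 :=
  !![0, 0, 0, 1; 0, 0, 1, 0; 0, 1, 0, 0; 1, 0, 0, 0]

open Matrix in
/-- The key identity: `q(u) = (u²)ᵀ Ω u` in any commutative ring over `𝔽₂`. -/
lemma quad_eq (u v : Fin 4 → MvPolynomial (Fin 4) F2) :
    v ⬝ᵥ (Omega.map (C : F2 →+* MvPolynomial (Fin 4) F2) *ᵥ u)
      = v 0 * u 3 + v 1 * u 2 + v 2 * u 1 + v 3 * u 0 := by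
  simp [dotProduct, mulVec, Fin.sum_univ_four, Omega]

open Matrix in
/-- Squaring commutes with `𝔽₂`-linear substitution. -/
lemma sq_mulVec (g : Matrix (Fin 4) (Fin 4) F2) (i : Fin 4) :
    ((g.map (C : F2 →+* MvPolynomial (Fin 4) F2) *ᵥ X) i) ^ 2
      = (g.map (C : F2 →+* MvPolynomial (Fin 4) F2) *ᵥ fun j => X j ^ 2) i := by
  have hsq : ∀ a : F2, a ^ 2 = a := by decide
  simp only [mulVec, dotProduct, Matrix.map_apply]
  rw [sum_pow_char 2]
  refine Finset.sum_congr rfl fun j _ => ?_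
  rw [mul_pow, ← map_pow, hsq]

open Matrix in
/-- every `g ∈ GL₄(𝔽₂)` with `gᵀ Ω g = Ω` (i.e. every element of the symplectic
group `Sp₄(𝔽₂)` defined by `Ω`) preserves the cubic form `c₀`. -/
theorem symplectic_preserves_c0 :
    ∀ g : GL (Fin 4) F2,
      (g : Matrix (Fin 4) (Fin 4) F2)ᵀ * Omega * (g : Matrix (Fin 4) (Fin 4) F2) = Omega →
      act (g : Matrix (Fin 4) (Fin 4) F2) c0 = c0 := by
  intro g hg
  set M : Matrix (Fin 4) (Fin 4) F2 := (g : Matrix (Fin 4) (Fin 4) F2) with hM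
  let c : F2 →+* MvPolynomial (Fin 4) F2 := C
  have h1 : act M c0 = (M.map c *ᵥ fun j => X j ^ 2) ⬝ᵥ (Omega.map c *ᵥ (M.map c *ᵥ X)) := by
    have hu : (fun i => ∑ j, M i j • (X j : MvPolynomial (Fin 4) F2)) = M.map c *ᵥ X := by
      funext i
      simp [mulVec, dotProduct, c, MvPolynomial.smul_eq_C_mul]
    rw [quad_eq, act, hu]
    simp only [c, ← sq_mulVec]
    simp only [c0, map_add, map_mul, map_pow, aeval_X]
    ring
  have h2 : c0 = (fun j => X j ^ 2) ⬝ᵥ (Omega.map c *ᵥ X) := by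
    rw [quad_eq, c0]
    ring
  have h3 : (M.map c)ᵀ * Omega.map c * M.map c = Omega.map c := by
    rw [← Matrix.transpose_map, ← Matrix.map_mul, ← Matrix.map_mul, hg]
  rw [← h3, Matrix.mul_assoc, ← Matrix.mulVec_mulVec, ← Matrix.mulVec_mulVec,
    Matrix.dotProduct_mulVec _ (M.map c)ᵀ, Matrix.vecMul_transpose] at h2
  rw [h1]
  exact h2.symm
end
end

section
/- The stabilizer subgroup {g ∈ GL₄(𝔽₂) : c₀ ∘ g = c₀} of the cubic form c₀ = x²t + y²z + yz² + xt² is isomorphic to the symmetric group S₆ (in particular it has order 720). -/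
open MvPolynomial

noncomputable section

/-- The antidiagonal symplectic Gram matrix. -/
def J4 : Matrix (Fin 4) (Fin 4) F2 := !![0,0,0,1;0,0,1,0;0,1,0,0;1,0,0,0]

/-- The cubic form `∑ A i j X_i² X_j`. -/
def cub (A : Matrix (Fin 4) (Fin 4) F2) : MvPolynomial (Fin 4) F2 :=
  ∑ i, ∑ j, C (A i j) * (X i ^ 2 * X j)

lemma c0_eq : c0 = cub J4 := by
  simp [c0, cub, J4, Fin.sum_univ_four]
  ring

lemma exps_inj (i j k l : Fin 4)
    (h : (Finsupp.single k 2 + Finsupp.single l 1 : Fin 4 →₀ ℕ)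
      = Finsupp.single i 2 + Finsupp.single j 1) : k = i ∧ l = j := by
  have h' : ∀ m : Fin 4, (if k = m then 2 else 0) + (if l = m then 1 else 0)
      = (if i = m then 2 else 0) + (if j = m then 1 else 0) := by
    intro m
    have := DFunLike.congr_fun h m
    simpa [Finsupp.single_apply] using this
  clear h
  revert i j k l
  decide

lemma coeff_cub (A : Matrix (Fin 4) (Fin 4) F2) (i j : Fin 4) :
    coeff (Finsupp.single i 2 + Finsupp.single j 1) (cub A) = A i j := by
  have hm : ∀ k l : Fin 4, (C (A k l) * (X k ^ 2 * X l) : MvPolynomial (Fin 4) F2)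
      = monomial (Finsupp.single k 2 + Finsupp.single l 1) (A k l) := by
    intro k l
    rw [X_pow_eq_monomial, X, monomial_mul, C_mul_monomial]
    simp
  have hc : ∀ k l : Fin 4, coeff (Finsupp.single i 2 + Finsupp.single j 1)
      (C (A k l) * (X k ^ 2 * X l) : MvPolynomial (Fin 4) F2)
      = if k = i then (if l = j then A k l else 0) else 0 := by
    intro k l
    rw [hm, coeff_monomial]
    by_cases h : (Finsupp.single k 2 + Finsupp.single l 1 : Fin 4 →₀ ℕ)
      = Finsupp.single i 2 + Finsupp.single j 1
    · obtain ⟨rfl, rfl⟩ := exps_inj i j k l h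
      simp
    · rw [if_neg h]
      split_ifs with h1 h2
      · subst h1 h2
        exact absurd rfl h
      · rfl
      · rfl
  simp only [cub, coeff_sum, hc]
  simp

lemma cub_injective : Function.Injective cub := by
  intro A B h
  ext i j
  rw [← coeff_cub A i j, h, coeff_cub]

lemma sq_lin (r : Fin 4 → F2) :
    (∑ j, r j • X j : MvPolynomial (Fin 4) F2) ^ 2 = ∑ j, r j • X j ^ 2 := by
  rw [sum_pow_char 2]
  refine Finset.sum_congr rfl fun j _ => ?_
  rw [smul_pow]
  congr 1
  generalize r j = a
  revert a
  decide

lemma act_cub (g A : Matrix (Fin 4) (Fin 4) F2) :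
    act g (cub A) = cub (g.transpose * A * g) := by
  have hL : act g (cub A) = ∑ i, ∑ j, ∑ k, ∑ l,
      C (g i k * A i j * g j l) * (X k ^ 2 * X l) := by
    simp only [act, cub, map_sum, map_mul, map_pow, aeval_X, algHom_C,
      MvPolynomial.algebraMap_eq]
    refine Finset.sum_congr rfl fun i _ => Finset.sum_congr rfl fun j _ => ?_
    rw [sq_lin, Finset.sum_mul_sum, Finset.mul_sum]
    refine Finset.sum_congr rfl fun k _ => ?_
    rw [Finset.mul_sum]
    refine Finset.sum_congr rfl fun l _ => ?_
    rw [MvPolynomial.smul_eq_C_mul, MvPolynomial.smul_eq_C_mul]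
    ring
  have hR : cub (g.transpose * A * g) = ∑ k, ∑ l, ∑ j, ∑ i,
      C (g i k * A i j * g j l) * (X k ^ 2 * X l) := by
    simp only [cub, Matrix.mul_apply, Matrix.transpose_apply, Finset.sum_mul, map_sum]
  rw [hL, hR]
  calc _ = ∑ i, ∑ k, ∑ j, ∑ l, C (g i k * A i j * g j l) * (X k ^ 2 * X l) :=
        Finset.sum_congr rfl fun i _ => Finset.sum_comm
    _ = ∑ k, ∑ i, ∑ j, ∑ l, C (g i k * A i j * g j l) * (X k ^ 2 * X l) := Finset.sum_comm
    _ = ∑ k, ∑ i, ∑ l, ∑ j, C (g i k * A i j * g j l) * (X k ^ 2 * X l) :=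
        Finset.sum_congr rfl fun k _ => Finset.sum_congr rfl fun i _ => Finset.sum_comm
    _ = ∑ k, ∑ l, ∑ i, ∑ j, C (g i k * A i j * g j l) * (X k ^ 2 * X l) :=
        Finset.sum_congr rfl fun k _ => Finset.sum_comm
    _ = _ := Finset.sum_congr rfl fun k _ => Finset.sum_congr rfl fun l _ => Finset.sum_comm

lemma mem_stab_iff (g : GL (Fin 4) F2) : g ∈ stab c0 ↔
    (g : Matrix (Fin 4) (Fin 4) F2).transpose * J4 * (g : Matrix (Fin 4) (Fin 4) F2) = J4 := by
  change act _ c0 = c0 ↔ _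
  rw [c0_eq, act_cub]
  exact cub_injective.eq_iff

/-! ### The homomorphism from `S₆` -/

/-- Columns: six vectors of `𝔽₂⁴` with zero sum. -/
def W46 : Matrix (Fin 4) (Fin 6) F2 :=
  !![0,1,0,1,1,1; 0,0,0,1,0,1; 0,0,0,0,1,1; 0,0,1,1,1,1]

/-- Even-weight section of `W46`. -/
def P64 : Matrix (Fin 6) (Fin 4) F2 :=
  !![1,1,1,1; 1,1,1,0; 0,1,1,1; 0,1,0,0; 0,0,1,0; 0,0,0,0]

def onesC : Matrix (Fin 6) (Fin 1) F2 := fun _ _ => 1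
def onesR : Matrix (Fin 1) (Fin 6) F2 := fun _ _ => 1
def r5 : Matrix (Fin 1) (Fin 6) F2 := !![0,0,0,0,0,1]
def s0 : Matrix (Fin 6) (Fin 1) F2 := !![1;0;0;0;0;0]
def a1 : Matrix (Fin 1) (Fin 6) F2 := !![0,1,1,1,1,1]

lemma W_P : W46 * P64 = 1 := by decide +kernel
lemma P_W : P64 * W46 = 1 + onesC * r5 + s0 * onesR := by decide +kernel
lemma W_ones : W46 * onesC = 0 := by decide +kernel
lemma ones_P : onesR * P64 = 0 := by decide +kernel
lemma Pt_ones : P64.transpose * onesC = 0 := by decide +kernel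
lemma Pt_P : P64.transpose * P64 = J4 := by decide +kernel
lemma Wt_J_W : W46.transpose * J4 * W46 = 1 + onesC * a1 + s0 * onesR := by decide +kernel

/-- Permutation matrix with `e_j ↦ e_{σ j}`. -/
def S66 (σ : Equiv.Perm (Fin 6)) : Matrix (Fin 6) (Fin 6) F2 :=
  fun i j => if i = σ j then 1 else 0

lemma S_mul (σ τ : Equiv.Perm (Fin 6)) : S66 (σ * τ) = S66 σ * S66 τ := by
  ext i j
  simp [S66, Matrix.mul_apply]
  congr

lemma S_one : S66 1 = 1 := by
  ext i j
  simp [S66, Matrix.one_apply]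
  congr

lemma St (σ : Equiv.Perm (Fin 6)) : (S66 σ).transpose = S66 σ⁻¹ := by
  ext i j
  simp only [S66, Matrix.transpose_apply, Equiv.Perm.eq_inv_iff_eq]
  simp only [eq_comm]

lemma S_ones (σ : Equiv.Perm (Fin 6)) : S66 σ * onesC = onesC := by
  ext i j
  have : ∀ x, (i = σ x) = (σ⁻¹ i = x) := fun x => by
    rw [Equiv.Perm.inv_eq_iff_eq]
  simp [S66, Matrix.mul_apply, onesC, this]

lemma ones_S (σ : Equiv.Perm (Fin 6)) : onesR * S66 σ = onesR := by
  ext i j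
  simp [S66, Matrix.mul_apply, onesR]

/-- The `4 × 4` matrix attached to a permutation. -/
def M4 (σ : Equiv.Perm (Fin 6)) : Matrix (Fin 4) (Fin 4) F2 := W46 * S66 σ * P64

lemma M_one : M4 1 = 1 := by rw [M4, S_one, Matrix.mul_one, W_P]

lemma M_mul (σ τ : Equiv.Perm (Fin 6)) : M4 (σ * τ) = M4 σ * M4 τ := by
  have h : M4 σ * M4 τ = W46 * S66 σ * (P64 * W46) * (S66 τ * P64) := by
    simp only [M4, Matrix.mul_assoc]
  have h1 : W46 * S66 σ * onesC = 0 := by rw [Matrix.mul_assoc, S_ones, W_ones]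
  have h2 : onesR * (S66 τ * P64) = 0 := by rw [← Matrix.mul_assoc, ones_S, ones_P]
  rw [h, P_W, Matrix.mul_add, Matrix.mul_add, Matrix.add_mul, Matrix.add_mul,
    ← Matrix.mul_assoc _ onesC, h1, ← Matrix.mul_assoc _ s0, Matrix.mul_assoc _ onesR, h2, M4, S_mul]
  simp [Matrix.mul_assoc]

lemma M_symp (σ : Equiv.Perm (Fin 6)) : (M4 σ).transpose * J4 * M4 σ = J4 := by
  have h : (M4 σ).transpose * J4 * M4 σ
      = P64.transpose * S66 σ⁻¹ * (W46.transpose * J4 * W46) * (S66 σ * P64) := by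
    simp only [M4, Matrix.transpose_mul, St, Matrix.mul_assoc]
  have h1 : P64.transpose * S66 σ⁻¹ * onesC = 0 := by rw [Matrix.mul_assoc, S_ones, Pt_ones]
  have h2 : onesR * (S66 σ * P64) = 0 := by rw [← Matrix.mul_assoc, ones_S, ones_P]
  rw [h, Wt_J_W, Matrix.mul_add, Matrix.mul_add, Matrix.add_mul, Matrix.add_mul,
    ← Matrix.mul_assoc _ onesC, h1, ← Matrix.mul_assoc _ s0, Matrix.mul_assoc _ onesR, h2,
    Matrix.mul_one, Matrix.mul_assoc, ← Matrix.mul_assoc (S66 σ⁻¹), ← S_mul]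
  simp [S_one, Pt_P]

/-- `S₆ → GL₄(𝔽₂)`. -/
def phiGL : Equiv.Perm (Fin 6) →* GL (Fin 4) F2 :=
  MonoidHom.toHomUnits { toFun := M4, map_one' := M_one, map_mul' := M_mul }

/-- `S₆ → stab c0`. -/
def phi : Equiv.Perm (Fin 6) →* stab c0 :=
  phiGL.codRestrict (stab c0) fun σ => (mem_stab_iff _).2 (M_symp σ)

lemma key_fin : ∀ a b : Fin 6, a ≠ b → ∀ i : Fin 6, i ≠ 0 →
    (∀ k, W46 k a + W46 k b = W46 k i) → (a = 0 ∧ b = i) ∨ (a = i ∧ b = 0) := by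
  decide +kernel

lemma M_inj (σ : Equiv.Perm (Fin 6)) (h : M4 σ = 1) : σ = 1 := by
  have hW : W46 * S66 σ = W46 + (W46 * S66 σ * s0) * onesR := by
    have h1 : W46 * S66 σ * onesC = 0 := by rw [Matrix.mul_assoc, S_ones, W_ones]
    have h2 : W46 * S66 σ * (P64 * W46) = W46 := by
      rw [← Matrix.mul_assoc]
      change M4 σ * W46 = W46
      rw [h, Matrix.one_mul]
    rw [P_W, Matrix.mul_add, Matrix.mul_add, ← Matrix.mul_assoc _ onesC, h1, Matrix.zero_mul,
      add_zero, Matrix.mul_one, ← Matrix.mul_assoc] at h2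
    nth_rewrite 2 [← h2]
    ext i j
    rw [add_assoc, Matrix.add_apply, Matrix.add_apply, CharTwo.add_self_eq_zero, add_zero]
  have hs : ∀ k j, (W46 * S66 σ) k j = W46 k (σ j) := by
    intro k j
    simp [S66, Matrix.mul_apply]
  have hp : ∀ i k, W46 k (σ 0) + W46 k (σ i) = W46 k i := by
    intro i k
    have e := congrFun (congrFun hW k) i
    have e2 : ((W46 * S66 σ * s0) * onesR) k i = W46 k (σ 0) := by
      rw [Matrix.mul_apply]
      simp only [Finset.univ_unique, Finset.sum_singleton]
      rw [Matrix.mul_apply]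
      simp only [hs]
      simp [Fin.sum_univ_succ, s0, onesR]
    rw [Matrix.add_apply, e2, hs] at e
    rw [e, add_comm, add_assoc, CharTwo.add_self_eq_zero, add_zero]
  have hk : ∀ i : Fin 6, i ≠ 0 → (σ 0 = 0 ∧ σ i = i) ∨ (σ 0 = i ∧ σ i = 0) := fun i hi =>
    key_fin _ _ (fun e => hi (σ.injective e).symm) i hi (hp i)
  have h0 : σ 0 = 0 := by
    rcases hk 1 (by decide) with h1 | h1
    · exact h1.1
    · rcases hk 2 (by decide) with h2 | h2
      · exact h2.1
      · exact absurd (h1.1.symm.trans h2.1) (by decide)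
  ext i : 1
  by_cases hi : i = 0
  · rw [hi, h0]; rfl
  · rcases hk i hi with h1 | h1
    · exact h1.2
    · exact absurd (h1.1.symm.trans h0) hi

lemma phi_injective : Function.Injective phi := by
  rw [injective_iff_map_eq_one]
  intro σ h
  apply M_inj
  have h' : ((phi σ : GL (Fin 4) F2) : Matrix (Fin 4) (Fin 4) F2) = 1 := by rw [h]; rfl
  exact h'

/-! ### Counting symplectic bases -/

/-- Vectors of `𝔽₂⁴` as nested pairs. -/
abbrev V4 : Type := F2 × F2 × F2 × F2

def vecs : List V4 :=
  [(0,0,0,0),(0,0,0,1),(0,0,1,0),(0,0,1,1),(0,1,0,0),(0,1,0,1),(0,1,1,0),(0,1,1,1),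
   (1,0,0,0),(1,0,0,1),(1,0,1,0),(1,0,1,1),(1,1,0,0),(1,1,0,1),(1,1,1,0),(1,1,1,1)]

lemma mem_vecs : ∀ v : V4, v ∈ vecs := by decide +kernel

def bil (x y : V4) : F2 := x.1 * y.2.2.2 + x.2.1 * y.2.2.1 + x.2.2.1 * y.2.1 + x.2.2.2 * y.1

def bases : List (V4 × V4 × V4 × V4) :=
  vecs.flatMap fun a => (vecs.filter fun d => bil a d = 1).flatMap fun d =>
    (vecs.filter fun b => bil a b = 0 ∧ bil d b = 0).flatMap fun b =>
      (vecs.filter fun c => bil a c = 0 ∧ bil d c = 0 ∧ bil b c = 1).map fun c => (a, b, c, d)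

lemma bases_length : bases.length = 720 := by decide +kernel

lemma mem_bases (a b c d : V4) (h1 : bil a d = 1) (h2 : bil a b = 0) (h3 : bil d b = 0)
    (h4 : bil a c = 0) (h5 : bil d c = 0) (h6 : bil b c = 1) : (a, b, c, d) ∈ bases := by
  simp only [bases, List.mem_flatMap, List.mem_filter, List.mem_map, decide_eq_true_eq]
  exact ⟨a, mem_vecs a, d, ⟨mem_vecs d, h1⟩, b, ⟨mem_vecs b, h2, h3⟩, c,
    ⟨mem_vecs c, h4, h5, h6⟩, rfl⟩

/-- A column of a matrix. -/
def colV (g : Matrix (Fin 4) (Fin 4) F2) (j : Fin 4) : V4 := (g 0 j, g 1 j, g 2 j, g 3 j)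

lemma bil_col (g : Matrix (Fin 4) (Fin 4) F2) (i j : Fin 4) :
    bil (colV g i) (colV g j) = (g.transpose * J4 * g) i j := by
  simp [bil, colV, J4, Matrix.mul_apply, Fin.sum_univ_four]
  ring

lemma card_le : Nat.card (stab c0) ≤ 720 := by
  classical
  let f : stab c0 → {x // x ∈ bases.toFinset} := fun g =>
    ⟨(colV g.1.1 0, colV g.1.1 1, colV g.1.1 2, colV g.1.1 3), by
      have h := (mem_stab_iff g.1).1 g.2
      rw [List.mem_toFinset]
      apply mem_bases <;> rw [bil_col, h] <;> rfl⟩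
  have hf : Function.Injective f := by
    intro g h e
    have e' := congrArg Subtype.val e
    simp only [f, colV, Prod.mk.injEq] at e'
    apply Subtype.ext
    apply Units.ext
    ext i j
    fin_cases i <;> fin_cases j <;> simp_all
  have := Nat.card_le_card_of_injective f hf
  refine this.trans ?_
  rw [Nat.card_eq_fintype_card, Fintype.card_coe]
  exact (List.toFinset_card_le _).trans bases_length.le

/-- the stabilizer of `c₀ = x²t + y²z + yz² + xt²` in `GL₄(𝔽₂)` is isomorphic
to the symmetric group `S₆`; in particular it has order `720`. -/
theorem stab_c0_iso_S6 :
    Nonempty (stab c0 ≃* Equiv.Perm (Fin 6)) ∧ Nat.card (stab c0) = 720 := by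
  have hP : Nat.card (Equiv.Perm (Fin 6)) = 720 := by
    rw [Nat.card_eq_fintype_card, Fintype.card_perm, Fintype.card_fin]
    simp [Nat.factorial]
  have hle : Nat.card (stab c0) ≤ Nat.card (Equiv.Perm (Fin 6)) := card_le.trans hP.ge
  have hb : Function.Bijective phi := phi_injective.bijective_of_nat_card_le hle
  exact ⟨⟨(MulEquiv.ofBijective phi hb).symm⟩, (Nat.card_congr (Equiv.ofBijective phi hb)).symm.trans hP⟩
end
end
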